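/- There exists a universal constant C > 0 such that the following holds for all positive integers n and d ≥ 2, all reals σ, f > 0, and all δ ∈ (0,1). Given symmetric matrices A_1, ..., A_n ∈ ℝ^{d×d} with ‖∑_{i=1}^n A_i²‖_op ≤ σ² and ∑_{i=1}^n ‖A_i‖_F² ≤ n f², there exists a linear subspace H ⊆ ℝ^n of dimension at least (1−δ) n such that, if y is a standard Gaussian random vector on H (i.e., y = ∑_j h_j v^j for an orthonormal basis v^1, ..., v^m of H and i.i.d. standard Gaussians h_j), then 𝔼[‖∑_{i=1}^n y_i A_i‖_op] ≤ C · (σ + (log d)^{3/4} · σ^{1/2} · (f / δ^{1/2})^{1/2}). -/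

import Mathlib

open MeasureTheory ProbabilityTheory

/-- Operator norm (largest singular value) of a real matrix, as the norm of the
induced linear map between Euclidean spaces. -/
noncomputable def opNorm {m n : Type*} [Fintype m] [Fintype n] [DecidableEq n]
    (M : Matrix m n ℝ) : ℝ :=
  ‖LinearMap.toContinuousLinearMap (Matrix.toEuclideanLin M)‖

/-- Squared Frobenius norm of a real matrix. -/
noncomputable def frobNormSq {m n : Type*} [Fintype m] [Fintype n]
    (M : Matrix m n ℝ) : ℝ := ∑ i, ∑ j, (M i j) ^ 2

open MeasureTheory ProbabilityTheory

lemma aux_int_pow (k : ℕ) : Integrable (fun x : ℝ => x ^ k) (gaussianReal 0 1) := by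
  have h := (memLp_id_gaussianReal (μ := 0) (v := 1) (k : NNReal)).integrable_norm_pow'
  have h2 : Integrable (fun x : ℝ => ‖x ^ k‖) (gaussianReal 0 1) := by
    simpa [norm_pow] using h
  exact (integrable_norm_iff (by fun_prop)).1 h2

lemma aux_mom_rec (k : ℕ) : ∫ x, x ^ (k + 1) ∂(gaussianReal 0 1)
    = k * ∫ x, x ^ (k - 1) ∂(gaussianReal 0 1) := by
  have hintg : ∀ j : ℕ, Integrable (fun x : ℝ => x ^ j * gaussianPDFReal 0 1 x) := by
    intro j
    have := aux_int_pow j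
    rw [gaussianReal_of_var_ne_zero _ one_ne_zero] at this
    rw [integrable_withDensity_iff (measurable_gaussianPDF _ _)
      (ae_of_all _ fun _ => gaussianPDF_lt_top)] at this
    simpa [toReal_gaussianPDF] using this
  have hder : ∀ x : ℝ, HasDerivAt (fun x => - gaussianPDFReal 0 1 x) (x * gaussianPDFReal 0 1 x) x := by
    intro x
    unfold gaussianPDFReal
    have h1 : HasDerivAt (fun x : ℝ => -(x - 0) ^ 2 / (2 * ((1 : NNReal) : ℝ))) (-x) x := by
      have := (((hasDerivAt_id x).sub_const 0).pow 2).neg.div_const (2 * ((1 : NNReal) : ℝ))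
      refine this.congr_deriv ?_
      simp
      ring
    have := (h1.exp.const_mul ((√(2 * Real.pi * ((1 : NNReal) : ℝ)))⁻¹)).neg
    refine this.congr_deriv ?_
    ring
  rw [integral_gaussianReal_eq_integral_smul one_ne_zero,
    integral_gaussianReal_eq_integral_smul one_ne_zero]
  have := integral_mul_deriv_eq_deriv_mul_of_integrable (u := fun x : ℝ => x ^ k)
    (v := fun x => - gaussianPDFReal 0 1 x) (u' := fun x : ℝ => k * x ^ (k - 1))
    (v' := fun x => x * gaussianPDFReal 0 1 x)
    (fun x _ => by simpa using hasDerivAt_pow k x) (fun x _ => hder x)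
    (by
      have := hintg (k + 1)
      refine this.congr (ae_of_all _ fun x => ?_)
      simp; ring)
    (by
      have := ((hintg (k - 1)).const_mul (k : ℝ)).neg
      refine this.congr (ae_of_all _ fun x => ?_)
      simp; ring)
    (by
      have := (hintg k).neg
      refine this.congr (ae_of_all _ fun x => ?_)
      simp)
  rw [← integral_const_mul]
  calc _ = ∫ x : ℝ, x ^ k * (x * gaussianPDFReal 0 1 x) := by
        congr 1; ext x; simp; ring
    _ = _ := by
        rw [this, ← integral_neg]; congr 1; ext x; simp; ring

section poly
open MvPolynomial
variable {κ : Type*} [Fintype κ]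

/-- standard Gaussian measure -/
noncomputable abbrev gam (κ : Type*) [Fintype κ] : Measure (κ → ℝ) :=
  Measure.pi fun _ : κ => gaussianReal 0 1

lemma eval_mono_aux (g : κ → ℝ) (s : κ →₀ ℕ) (a : ℝ) :
    eval g (monomial s a) = a * ∏ i, g i ^ s i := by
  rw [eval_monomial, Finsupp.prod_fintype]
  simp

lemma integrable_eval (p : MvPolynomial κ ℝ) :
    Integrable (fun g => eval g p) (gam κ) := by
  induction p using MvPolynomial.induction_on' with
  | monomial s a =>
    simp only [eval_mono_aux]
    exact (Integrable.fintype_prod (f := fun i (x : ℝ) => x ^ s i) fun i => aux_int_pow _).const_mul _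
  | add p q hp hq => simp only [map_add]; exact hp.add hq

lemma int_mono (s : κ →₀ ℕ) (a : ℝ) : ∫ g, eval g (monomial s a) ∂(gam κ)
    = a * ∏ i, ∫ x, x ^ s i ∂(gaussianReal 0 1) := by
  simp only [eval_mono_aux]
  rw [integral_const_mul, integral_fintype_prod_eq_prod (fun i (x : ℝ) => x ^ s i)]

lemma gauss_ibp (j : κ) (p : MvPolynomial κ ℝ) :
    ∫ g, g j * eval g p ∂(gam κ) = ∫ g, eval g (pderiv j p) ∂(gam κ) := by
  classical
  induction p using MvPolynomial.induction_on' with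
  | monomial s a =>
    have : ∀ g : κ → ℝ, g j * eval g (monomial s a)
        = eval g (monomial (s + Finsupp.single j 1) a) := by
      intro g
      rw [monomial_add_single]; simp; ring
    simp only [this, pderiv_monomial, int_mono]
    rw [← Finset.mul_prod_erase _ _ (Finset.mem_univ j),
      ← Finset.mul_prod_erase _ _ (Finset.mem_univ j)]
    have e : ∀ (f : κ →₀ ℕ), (∀ i, i ≠ j → f i = s i) →
       ∏ x ∈ Finset.univ.erase j, ∫ y, y ^ f x ∂(gaussianReal 0 1)
        = ∏ x ∈ Finset.univ.erase j, ∫ y, y ^ s x ∂(gaussianReal 0 1) := by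
      intro f hf
      refine Finset.prod_congr rfl fun x hx => ?_
      rw [hf x (Finset.ne_of_mem_erase hx)]
    rw [e _ (fun i hi => by simp [hi.symm]),
      e (s - Finsupp.single j 1) (fun i hi => by simp [hi.symm])]
    simp only [Finsupp.add_apply, Finsupp.single_eq_same, Finsupp.tsub_apply, aux_mom_rec]
    ring
  | add p q hp hq =>
    simp only [map_add, mul_add]
    rw [integral_add, integral_add, hp, hq]
    · exact integrable_eval _
    · exact integrable_eval _
    · exact (integrable_eval (X j * p)).congr (ae_of_all _ fun g => by simp)
    · exact (integrable_eval (X j * q)).congr (ae_of_all _ fun g => by simp)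
end poly

open MeasureTheory ProbabilityTheory
set_option linter.unusedSectionVars false
section rot
open MvPolynomial
variable {ι : Type*} [Fintype ι]

/-- rotation of a pair of Gaussian vectors -/
noncomputable def rot (θ : ℝ) (g : ι ⊕ ι → ℝ) : ι ⊕ ι → ℝ :=
  Sum.elim (fun j => g (Sum.inl j))
    (fun j => Real.cos θ * g (Sum.inl j) + Real.sin θ * g (Sum.inr j))

noncomputable def subst (θ : ℝ) : MvPolynomial (ι ⊕ ι) ℝ →ₐ[ℝ] MvPolynomial (ι ⊕ ι) ℝ :=
  aeval (Sum.elim (fun j => X (Sum.inl j))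
    (fun j => C (Real.cos θ) * X (Sum.inl j) + C (Real.sin θ) * X (Sum.inr j)))

lemma eval_subst (θ : ℝ) (g : ι ⊕ ι → ℝ) (p : MvPolynomial (ι ⊕ ι) ℝ) :
    eval g (subst θ p) = eval (rot θ g) p := by
  induction p using MvPolynomial.induction_on with
  | C a => simp [subst]
  | add p q hp hq => simp [hp, hq]
  | mul_X p i hp =>
    rw [map_mul, map_mul, hp, map_mul]
    rcases i with i | i <;> simp [subst, rot]

lemma pderiv_inl_subst (θ : ℝ) (j : ι) (p : MvPolynomial (ι ⊕ ι) ℝ) :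
    pderiv (Sum.inl j) (subst θ p) = subst θ (pderiv (Sum.inl j) p)
      + C (Real.cos θ) * subst θ (pderiv (Sum.inr j) p) := by
  classical
  induction p using MvPolynomial.induction_on with
  | C a => simp [subst]
  | add p q hp hq => simp [hp, hq]; ring
  | mul_X p i hp =>
    rw [map_mul, pderiv_mul, pderiv_mul, pderiv_mul, hp]
    rcases i with i | i
    · by_cases h : i = j
      · subst h; simp [_root_.subst]; ring
      · simp [_root_.subst, pderiv_X, h]; ring
    · by_cases h : i = j
      · subst h; simp [_root_.subst, pderiv_X]; ring
      · simp [_root_.subst, pderiv_X, h]; ring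

lemma pderiv_inr_subst (θ : ℝ) (j : ι) (p : MvPolynomial (ι ⊕ ι) ℝ) :
    pderiv (Sum.inr j) (subst θ p) = C (Real.sin θ) * subst θ (pderiv (Sum.inr j) p) := by
  classical
  induction p using MvPolynomial.induction_on with
  | C a => simp [subst]
  | add p q hp hq => simp [hp, hq]; ring
  | mul_X p i hp =>
    rw [map_mul, pderiv_mul, pderiv_mul, hp]
    rcases i with i | i
    · simp [_root_.subst, pderiv_X]; ring
    · by_cases h : i = j
      · subst h; simp [_root_.subst, pderiv_X]; ring
      · simp [_root_.subst, pderiv_X, h]; ring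

lemma rot_deriv (g : ι ⊕ ι → ℝ) (p : MvPolynomial (ι ⊕ ι) ℝ) (θ : ℝ) :
    HasDerivAt (fun θ => eval (rot θ g) p)
      (∑ j, (- Real.sin θ * g (Sum.inl j) + Real.cos θ * g (Sum.inr j))
        * eval (rot θ g) (pderiv (Sum.inr j) p)) θ := by
  classical
  induction p using MvPolynomial.induction_on with
  | C a => simpa using hasDerivAt_const θ a
  | add p q hp hq =>
    have := hp.add hq
    refine (this.congr_deriv ?_).congr_of_eventuallyEq (Filter.Eventually.of_forall fun x => by simp)
    rw [← Finset.sum_add_distrib]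
    refine Finset.sum_congr rfl fun j _ => ?_
    simp; ring
  | mul_X p i hp =>
    have h1 : HasDerivAt (fun θ => eval (rot θ g) (X i))
      (∑ j, (- Real.sin θ * g (Sum.inl j) + Real.cos θ * g (Sum.inr j))
        * eval (rot θ g) (pderiv (Sum.inr j) (X i))) θ := by
      rcases i with i | i
      · simpa [pderiv_X, rot] using hasDerivAt_const θ (g (Sum.inl i))
      · have := ((Real.hasDerivAt_cos θ).mul_const (g (Sum.inl i))).add
          ((Real.hasDerivAt_sin θ).mul_const (g (Sum.inr i)))
        refine (this.congr_deriv ?_).congr_of_eventuallyEq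
          (Filter.Eventually.of_forall fun x => by simp [rot])
        rw [Finset.sum_eq_single i]
        · simp
        · intro b _ hb; simp [pderiv_X, hb.symm]
        · simp
    have := hp.mul h1
    refine (this.congr_deriv ?_).congr_of_eventuallyEq (Filter.Eventually.of_forall fun x => by simp)
    rw [Finset.sum_mul, Finset.mul_sum, ← Finset.sum_add_distrib]
    refine Finset.sum_congr rfl fun j _ => ?_
    rw [pderiv_mul]; simp only [map_add, map_mul]; ring

lemma rot_bound (p : MvPolynomial (ι ⊕ ι) ℝ) :
    ∃ B : MvPolynomial (ι ⊕ ι) ℝ, ∀ θ g, |eval (rot θ g) p| ≤ eval g B := by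
  induction p using MvPolynomial.induction_on with
  | C a => exact ⟨C |a|, by simp⟩
  | add p q hp hq =>
    obtain ⟨B, hB⟩ := hp
    obtain ⟨D, hD⟩ := hq
    refine ⟨B + D, fun θ g => ?_⟩
    simp only [map_add]
    exact (abs_add_le _ _).trans (add_le_add (hB θ g) (hD θ g))
  | mul_X p i hp =>
    obtain ⟨B, hB⟩ := hp
    obtain ⟨D, hD⟩ : ∃ B : MvPolynomial (ι ⊕ ι) ℝ, ∀ θ g, |eval (rot θ g) (X i)| ≤ eval g B := by
      rcases i with i | i
      · refine ⟨1 + X (Sum.inl i) ^ 2, fun θ g => ?_⟩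
        simp only [rot, eval_X, Sum.elim_inl, map_add, map_one, map_pow]
        rw [abs_le]; constructor <;> nlinarith [sq_nonneg (g (Sum.inl i) - 1), sq_nonneg (g (Sum.inl i) + 1)]
      · refine ⟨1 + X (Sum.inl i) ^ 2 + X (Sum.inr i) ^ 2, fun θ g => ?_⟩
        simp only [rot, eval_X, Sum.elim_inr, map_add, map_one, map_pow]
        have h := Real.sin_sq_add_cos_sq θ
        set a := g (Sum.inl i)
        set b := g (Sum.inr i)
        rw [abs_le]; constructor <;>
        nlinarith [sq_nonneg (Real.cos θ - a), sq_nonneg (Real.cos θ + a),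
          sq_nonneg (Real.sin θ - b), sq_nonneg (Real.sin θ + b), sq_nonneg a, sq_nonneg b]
    refine ⟨B * D, fun θ g => ?_⟩
    rw [map_mul, map_mul, abs_mul]
    exact mul_le_mul (hB θ g) (hD θ g) (abs_nonneg _) ((abs_nonneg _).trans (hB θ g))

lemma integrable_rot (θ : ℝ) (p : MvPolynomial (ι ⊕ ι) ℝ) :
    Integrable (fun g => eval (rot θ g) p) (gam (ι ⊕ ι)) := by
  simp only [← eval_subst]
  exact integrable_eval _

/-- expectation functional -/
noncomputable def gE (θ : ℝ) : MvPolynomial (ι ⊕ ι) ℝ →ₗ[ℝ] ℝ where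
  toFun p := ∫ g, eval (rot θ g) p ∂(gam (ι ⊕ ι))
  map_add' p q := by
    simp only [map_add]
    exact integral_add (integrable_rot θ p) (integrable_rot θ q)
  map_smul' a p := by
    simp only [smul_eval, RingHom.id_apply, smul_eq_mul]
    exact integral_const_mul _ _

lemma gE_mono {θ : ℝ} {p q : MvPolynomial (ι ⊕ ι) ℝ}
    (h : ∀ g, eval (rot θ g) p ≤ eval (rot θ g) q) : gE θ p ≤ gE θ q :=
  integral_mono (integrable_rot θ p) (integrable_rot θ q) h

lemma gE_abs {θ : ℝ} {p q : MvPolynomial (ι ⊕ ι) ℝ}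
    (h : ∀ g, |eval (rot θ g) p| ≤ eval (rot θ g) q) : |gE θ p| ≤ gE θ q := by
  rw [abs_le, ← map_neg]
  exact ⟨gE_mono fun g => by simpa using (abs_le.1 (h g)).1, gE_mono fun g => (abs_le.1 (h g)).2⟩

lemma gE_C (θ a : ℝ) : gE θ (C a : MvPolynomial (ι ⊕ ι) ℝ) = a := by
  simp [gE]

set_option maxHeartbeats 1000000 in
lemma gE_deriv (p : MvPolynomial (ι ⊕ ι) ℝ) (θ : ℝ) :
    HasDerivAt (fun θ => gE θ p)
      (- Real.sin θ * gE θ (∑ j, pderiv (Sum.inl j) (pderiv (Sum.inr j) p))) θ := by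
  have key : HasDerivAt (fun θ => gE θ p) (∫ g, (∑ j, (- Real.sin θ * g (Sum.inl j)
      + Real.cos θ * g (Sum.inr j)) * eval (rot θ g) (pderiv (Sum.inr j) p)) ∂(gam (ι ⊕ ι))) θ := by
    choose B hB using fun j => rot_bound (pderiv (Sum.inr j) p)
    have hbi : Integrable (fun g => eval g (∑ j, (2 + X (Sum.inl j) ^ 2 + X (Sum.inr j) ^ 2) * B j))
        (gam (ι ⊕ ι)) := integrable_eval _
    refine (hasDerivAt_integral_of_dominated_loc_of_deriv_le (s := Set.univ)
      (bound := fun g => eval g (∑ j, (2 + X (Sum.inl j) ^ 2 + X (Sum.inr j) ^ 2) * B j))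
      (Filter.univ_mem)
      (Filter.Eventually.of_forall fun x => (integrable_rot x p).1) (integrable_rot θ p)
      (F' := fun θ g => (∑ j, (- Real.sin θ * g (Sum.inl j)
      + Real.cos θ * g (Sum.inr j)) * eval (rot θ g) (pderiv (Sum.inr j) p)))
      ?_ ?_ hbi ?_).2
    · have : Integrable (fun g => eval g (∑ j, (- C (Real.sin θ) * X (Sum.inl j)
          + C (Real.cos θ) * X (Sum.inr j)) * subst θ (pderiv (Sum.inr j) p))) (gam (ι ⊕ ι)) :=
        integrable_eval _
      refine (this.congr (ae_of_all _ fun g => ?_)).1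
      simp [eval_subst]
    · refine ae_of_all _ fun g x _ => ?_
      simp only [map_sum]
      refine (norm_sum_le _ _).trans (Finset.sum_le_sum fun j _ => ?_)
      rw [norm_mul, map_mul]
      refine mul_le_mul ?_ (hB j x g) (norm_nonneg _) ?_
      · simp only [map_add, map_pow, eval_X, map_ofNat]
        have h := Real.sin_sq_add_cos_sq x
        set a := g (Sum.inl j)
        set b := g (Sum.inr j)
        rw [Real.norm_eq_abs, abs_le]; constructor <;>
        nlinarith [sq_nonneg (Real.sin x - a), sq_nonneg (Real.sin x + a),
          sq_nonneg (Real.cos x - b), sq_nonneg (Real.cos x + b), sq_nonneg a, sq_nonneg b]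
      · simp only [map_add, map_pow, eval_X, map_ofNat]; positivity
    · exact ae_of_all _ fun g x _ => rot_deriv g p x
  refine key.congr_deriv ?_
  rw [integral_finsetSum, map_sum, Finset.mul_sum]
  · refine Finset.sum_congr rfl fun j _ => ?_
    have h1 := gauss_ibp (Sum.inl j) (subst θ (pderiv (Sum.inr j) p))
    have h2 := gauss_ibp (Sum.inr j) (subst θ (pderiv (Sum.inr j) p))
    have i1 : Integrable (fun g => g (Sum.inl j) * eval g (subst θ (pderiv (Sum.inr j) p)))
      (gam (ι ⊕ ι)) := (integrable_eval (X (Sum.inl j) * subst θ (pderiv (Sum.inr j) p))).congr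
        (ae_of_all _ fun g => by simp)
    have i2 : Integrable (fun g => g (Sum.inr j) * eval g (subst θ (pderiv (Sum.inr j) p)))
      (gam (ι ⊕ ι)) := (integrable_eval (X (Sum.inr j) * subst θ (pderiv (Sum.inr j) p))).congr
        (ae_of_all _ fun g => by simp)
    have e : ∀ g : ι ⊕ ι → ℝ, (- Real.sin θ * g (Sum.inl j)
      + Real.cos θ * g (Sum.inr j)) * eval (rot θ g) (pderiv (Sum.inr j) p)
      = -Real.sin θ * (g (Sum.inl j) * eval g (subst θ (pderiv (Sum.inr j) p)))
       + Real.cos θ * (g (Sum.inr j) * eval g (subst θ (pderiv (Sum.inr j) p))) := by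
      intro g; rw [eval_subst]; ring
    simp only [e]
    rw [integral_add (i1.const_mul _) (i2.const_mul _), integral_const_mul, integral_const_mul,
      h1, h2, pderiv_inl_subst, pderiv_inr_subst]
    simp only [map_add, map_mul, eval_C, eval_subst]
    rw [integral_add (integrable_rot _ _) ((integrable_rot _ _).const_mul _), integral_const_mul,
      integral_const_mul]
    simp only [gE, LinearMap.coe_mk, AddHom.coe_mk]
    ring
  · intro j _
    refine (integrable_eval ((- C (Real.sin θ) * X (Sum.inl j)
          + C (Real.cos θ) * X (Sum.inr j)) * subst θ (pderiv (Sum.inr j) p))).congr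
          (ae_of_all _ fun g => ?_)
    simp [eval_subst]

end rot

open MeasureTheory ProbabilityTheory
set_option linter.unusedSectionVars false
section marg
open MvPolynomial
variable {ι : Type*} [Fintype ι]

/-- expectation functional, one vector -/
noncomputable def E0 : MvPolynomial ι ℝ →ₗ[ℝ] ℝ where
  toFun p := ∫ g, eval g p ∂(gam ι)
  map_add' p q := by
    simp only [map_add]
    exact integral_add (integrable_eval p) (integrable_eval q)
  map_smul' a p := by
    simp only [smul_eval, RingHom.id_apply, smul_eq_mul]
    exact integral_const_mul _ _

lemma E0_mono {p q : MvPolynomial ι ℝ} (h : ∀ g, eval g p ≤ eval g q) : E0 p ≤ E0 q :=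
  integral_mono (integrable_eval p) (integrable_eval q) h

lemma E0_C (a : ℝ) : E0 (C a : MvPolynomial ι ℝ) = a := by simp [E0]

lemma E0_ibp (j : ι) (p : MvPolynomial ι ℝ) : E0 (X j * p) = E0 (pderiv j p) := by
  simpa [E0] using gauss_ibp j p

lemma int_prod_aux (F G : (ι → ℝ) → ℝ) :
    ∫ g, F (fun j => g (Sum.inl j)) * G (fun j => g (Sum.inr j)) ∂(gam (ι ⊕ ι))
      = (∫ g, F g ∂(gam ι)) * ∫ g, G g ∂(gam ι) := by
  rw [← integral_prod_mul]
  have := measurePreserving_sumPiEquivProdPi (fun _ : ι ⊕ ι => gaussianReal 0 1)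
  rw [← this.integral_comp (MeasurableEquiv.measurableEmbedding _)]
  rfl

lemma gE_inl (θ : ℝ) (p : MvPolynomial ι ℝ) : gE θ (rename Sum.inl p) = E0 p := by
  have := int_prod_aux (fun g => eval g p) (fun _ => 1)
  simp only [mul_one, integral_const, probReal_univ, smul_eq_mul] at this
  simp only [gE, E0, LinearMap.coe_mk, AddHom.coe_mk, eval_rename]
  exact this

lemma gE_inr (θ : ℝ) (p : MvPolynomial ι ℝ) : gE θ (rename Sum.inr p) = E0 p := by
  have hd : ∀ θ : ℝ, HasDerivAt (fun θ => gE θ (rename Sum.inr p)) 0 θ := by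
    intro θ
    refine (gE_deriv (rename Sum.inr p) θ).congr_deriv ?_
    have : ∀ j, pderiv (Sum.inl j) (pderiv (Sum.inr j) (rename Sum.inr p))
        = (0 : MvPolynomial (ι ⊕ ι) ℝ) := by
      intro j
      classical
      rw [pderiv_rename Sum.inr_injective]
      generalize pderiv j p = q
      apply pderiv_eq_zero_of_notMem_vars
      intro h
      have := vars_rename Sum.inr q h
      simp at this
    simp [this]
  have hc := is_const_of_deriv_eq_zero (fun θ => (hd θ).differentiableAt) (fun θ => (hd θ).deriv) θ 0
  rw [hc, ← gE_inl 0]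
  simp only [gE, LinearMap.coe_mk, AddHom.coe_mk, eval_rename]
  congr 1; ext g; congr 2
  ext j; simp [rot]

lemma gE_pihalf (p q : MvPolynomial ι ℝ) :
    gE (Real.pi / 2) (rename Sum.inl p * rename Sum.inr q) = E0 p * E0 q := by
  have := int_prod_aux (fun g => eval g p) (fun g => eval g q)
  simp only [gE, E0, LinearMap.coe_mk, AddHom.coe_mk, eval_rename, map_mul]
  rw [← this]
  congr 1; ext g; congr 3
  ext j; simp [rot]

lemma E0_odd (p : MvPolynomial ι ℝ) (h : ∀ g : ι → ℝ, eval (-g) p = - eval g p) : E0 p = 0 := by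
  have h1 := gE_inr Real.pi p
  have h2 := gE_inl Real.pi p
  have : gE Real.pi (rename Sum.inr p) = - gE Real.pi (rename Sum.inl p) := by
    simp only [gE, LinearMap.coe_mk, AddHom.coe_mk, eval_rename]
    rw [← integral_neg]
    congr 1; ext g
    rw [← h]
    congr 2; ext j; simp [rot]
  linarith
end marg

section mat
open MvPolynomial Matrix
variable {ι : Type*} [Fintype ι] {n : Type*} [Fintype n] [DecidableEq n]
variable {R : Type*} [CommRing R] [Algebra ℝ R]

lemma map_der_mul (D : Derivation ℝ R R) (M N : Matrix n n R) :
    (M * N).map D = M.map D * N + M * N.map D := by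
  ext a b
  simp only [Matrix.map_apply, Matrix.mul_apply, map_sum, Derivation.leibniz, smul_eq_mul, Matrix.add_apply]
  rw [← Finset.sum_add_distrib]
  refine Finset.sum_congr rfl fun x _ => by ring

lemma map_der_pow (D : Derivation ℝ R R) (M : Matrix n n R) (k : ℕ) :
    (M ^ k).map D = ∑ a ∈ Finset.range k, M ^ a * M.map D * M ^ (k - 1 - a) := by
  induction k with
  | zero =>
    ext a b
    simp only [pow_zero, map_apply, Finset.range_zero, Finset.sum_empty, Matrix.zero_apply, Matrix.one_apply]
    split_ifs <;> simp
  | succ k ih =>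
    rw [pow_succ, map_der_mul, ih, Finset.sum_range_succ, Finset.sum_mul]
    congr 1
    · refine Finset.sum_congr rfl fun a ha => ?_
      have := Finset.mem_range.1 ha
      rw [mul_assoc, ← pow_succ]
      congr 2; omega
    · simp

lemma der_trace (D : Derivation ℝ R R) (M : Matrix n n R) : D M.trace = (M.map D).trace := by
  simp [trace, map_sum]

/-- constant matrix -/
noncomputable abbrev cm {τ : Type*} (B : Matrix n n ℝ) : Matrix n n (MvPolynomial τ ℝ) := B.map C

lemma map_der_cm {τ : Type*} (j : τ) (B : Matrix n n ℝ) :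
    (cm B : Matrix n n (MvPolynomial τ ℝ)).map (pderiv j) = 0 := by
  ext a b; simp

/-- the polynomial Gaussian matrix -/
noncomputable def XM (A : ι → Matrix n n ℝ) : Matrix n n (MvPolynomial ι ℝ) :=
  ∑ i, (X i : MvPolynomial ι ℝ) • cm (A i)

/-- its value -/
def SM (A : ι → Matrix n n ℝ) (g : ι → ℝ) : Matrix n n ℝ := ∑ i, g i • A i

noncomputable def XL (A : ι → Matrix n n ℝ) : Matrix n n (MvPolynomial (ι ⊕ ι) ℝ) :=
  (XM A).map (rename Sum.inl)
noncomputable def XR (A : ι → Matrix n n ℝ) : Matrix n n (MvPolynomial (ι ⊕ ι) ℝ) :=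
  (XM A).map (rename Sum.inr)

lemma XM_apply (A : ι → Matrix n n ℝ) (a b : n) : XM A a b = ∑ i, X i * C (A i a b) := by
  simp [XM, Matrix.sum_apply]

lemma eval_XM (A : ι → Matrix n n ℝ) (g : ι → ℝ) : (XM A).map (eval g) = SM A g := by
  ext a b; simp [XM_apply, SM, Matrix.sum_apply]

lemma der_XM (A : ι → Matrix n n ℝ) (j : ι) : (XM A).map (pderiv j) = cm (A j) := by
  classical
  ext a b
  simp only [map_apply, XM_apply, map_sum, pderiv_mul, pderiv_C, mul_zero, add_zero, pderiv_X]
  simp [Pi.single_apply]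

lemma der_XL_l (A : ι → Matrix n n ℝ) (j : ι) : (XL A).map (pderiv (Sum.inl j)) = cm (A j) := by
  ext a b
  have := congrFun (congrFun (der_XM A j) a) b
  simp only [map_apply] at this
  simp [XL, pderiv_rename Sum.inl_injective, this]

lemma der_XR_r (A : ι → Matrix n n ℝ) (j : ι) : (XR A).map (pderiv (Sum.inr j)) = cm (A j) := by
  ext a b
  have := congrFun (congrFun (der_XM A j) a) b
  simp only [map_apply] at this
  simp [XR, pderiv_rename Sum.inr_injective, this]

lemma der_XL_r (A : ι → Matrix n n ℝ) (j : ι) : (XL A).map (pderiv (Sum.inr j)) = 0 := by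
  classical
  ext a b
  simp [XL, XM_apply, pderiv_mul, pderiv_X]

lemma der_XR_l (A : ι → Matrix n n ℝ) (j : ι) : (XR A).map (pderiv (Sum.inl j)) = 0 := by
  classical
  ext a b
  simp [XR, XM_apply, pderiv_mul, pderiv_X]

lemma trace_map_hom {S : Type*} [CommRing S] (φ : R →+* S) (M : Matrix n n R) :
    φ M.trace = (M.map φ).trace := by
  simp [trace, map_sum]

lemma eval_cm {τ : Type*} (g : τ → ℝ) (B : Matrix n n ℝ) :
    (cm B : Matrix n n (MvPolynomial τ ℝ)).map (eval g) = B := by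
  ext a b; simp

lemma eval_XL (A : ι → Matrix n n ℝ) (g : ι ⊕ ι → ℝ) :
    (XL A).map (eval g) = SM A (fun j => g (Sum.inl j)) := by
  rw [← eval_XM]; ext a b; simp [XL, eval_rename]; rfl

lemma eval_XR (A : ι → Matrix n n ℝ) (g : ι ⊕ ι → ℝ) :
    (XR A).map (eval g) = SM A (fun j => g (Sum.inr j)) := by
  rw [← eval_XM]; ext a b; simp [XR, eval_rename]; rfl

lemma map_pow_hom {S : Type*} [CommRing S] (φ : R →+* S) (M : Matrix n n R) (k : ℕ) :
    (M ^ k).map φ = (M.map φ) ^ k := by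
  exact map_pow (φ.mapMatrix) M k

lemma map_mul_hom {S : Type*} [CommRing S] (φ : R →+* S) (M N : Matrix n n R) :
    (M * N).map φ = M.map φ * N.map φ := Matrix.map_mul

lemma XL_pow (A : ι → Matrix n n ℝ) (k : ℕ) : XL A ^ k = ((XM A) ^ k).map (rename Sum.inl) :=
  (map_pow_hom (rename Sum.inl : MvPolynomial ι ℝ →ₐ[ℝ] MvPolynomial (ι ⊕ ι) ℝ).toRingHom (XM A) k).symm

lemma XR_pow (A : ι → Matrix n n ℝ) (k : ℕ) : XR A ^ k = ((XM A) ^ k).map (rename Sum.inr) :=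
  (map_pow_hom (rename Sum.inr : MvPolynomial ι ℝ →ₐ[ℝ] MvPolynomial (ι ⊕ ι) ℝ).toRingHom (XM A) k).symm

/-- mixed word -/
noncomputable def wordP (A : ι → Matrix n n ℝ) (B : Matrix n n ℝ) (k l : ℕ) :
    MvPolynomial (ι ⊕ ι) ℝ :=
  ∑ i, (cm (A i) * XR A ^ k * cm (A i) * XL A ^ l * cm B).trace

noncomputable def word1 (A : ι → Matrix n n ℝ) (B : Matrix n n ℝ) (k l : ℕ) :
    MvPolynomial ι ℝ :=
  ∑ i, (cm (A i) * XM A ^ k * cm (A i) * XM A ^ l * cm B).trace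

/-- moment matrices -/
noncomputable def MM (A : ι → Matrix n n ℝ) (k : ℕ) : Matrix n n ℝ := (XM A ^ k).map E0

lemma word_ibp (A : ι → Matrix n n ℝ) (B : Matrix n n ℝ) (N : ℕ) :
    E0 (XM A ^ (N + 2) * cm B).trace = ∑ k ∈ Finset.range (N + 1), E0 (word1 A B k (N - k)) := by
  have h1 : (XM A ^ (N + 2) * cm B).trace
      = ∑ i, X i * (cm (A i) * XM A ^ (N + 1) * cm B).trace := by
    rw [pow_succ', mul_assoc]
    conv_lhs => enter [1, 1]; rw [XM]
    rw [Finset.sum_mul, trace_sum]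
    refine Finset.sum_congr rfl fun i _ => ?_
    rw [smul_mul_assoc, trace_smul, smul_eq_mul, mul_assoc]
  rw [h1, map_sum]
  simp only [E0_ibp, der_trace, map_der_mul, map_der_cm, zero_mul, zero_add, mul_zero, add_zero,
    map_der_pow, der_XM, Finset.mul_sum, Finset.sum_mul, trace_sum, map_sum, word1]
  rw [Finset.sum_comm]
  refine Finset.sum_congr rfl fun k _ => Finset.sum_congr rfl fun i _ => ?_
  simp only [mul_assoc, add_tsub_cancel_right]

/-- crossing word -/
def crossW (A : ι → Matrix n n ℝ) (B X Y : Matrix n n ℝ) (a b c e : ℕ) : ℝ :=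
  ∑ i, ∑ j, (A i * Y ^ a * A j * Y ^ b * A i * X ^ c * A j * X ^ e * B).trace

lemma word_der (A : ι → Matrix n n ℝ) (B : Matrix n n ℝ) (k l : ℕ) (g : ι ⊕ ι → ℝ) :
    eval g (∑ j, pderiv (Sum.inl j) (pderiv (Sum.inr j) (wordP A B k l)))
      = ∑ a ∈ Finset.range k, ∑ c ∈ Finset.range l,
        crossW A B (SM A (fun j => g (Sum.inl j))) (SM A (fun j => g (Sum.inr j)))
          a (k - 1 - a) c (l - 1 - c) := by
  have hz : ∀ (j : ι) (k : ℕ), ((XR A) ^ k).map (pderiv (Sum.inl j)) = 0 := by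
    intro j k; simp [map_der_pow, der_XR_l]
  have hz' : ∀ (j : ι) (k : ℕ), ((XL A) ^ k).map (pderiv (Sum.inr j)) = 0 := by
    intro j k; simp [map_der_pow, der_XL_r]
  have e : ∀ (j i : ι), pderiv (Sum.inl j) (pderiv (Sum.inr j)
      (cm (A i) * XR A ^ k * cm (A i) * XL A ^ l * cm B).trace) =
      ∑ a ∈ Finset.range k, ∑ c ∈ Finset.range l,
        (cm (A i) * XR A ^ a * cm (A j) * XR A ^ (k - 1 - a) * cm (A i) * XL A ^ c * cm (A j)
          * XL A ^ (l - 1 - c) * cm B).trace := by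
    intro j i
    have : (∑ a ∈ Finset.range k, XR A ^ a * cm (A j) * XR A ^ (k - 1 - a)).map
        (pderiv (Sum.inl j)) = 0 := by
      rw [← der_XR_r, ← map_der_pow]
      refine Matrix.ext fun x y => ?_
      simp only [map_apply, XR_pow]
      classical
      rw [pderiv_rename Sum.inr_injective]
      apply pderiv_eq_zero_of_notMem_vars
      intro h
      have := vars_rename Sum.inr _ h
      simp at this
    rw [der_trace, map_der_mul, map_der_cm, mul_zero, add_zero, map_der_mul, hz', mul_zero, add_zero,
      map_der_mul, map_der_cm, mul_zero, add_zero, map_der_mul, map_der_cm, zero_mul, zero_add,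
      map_der_pow, der_XR_r]
    rw [der_trace, map_der_mul, map_der_cm, mul_zero, add_zero, map_der_mul, map_der_mul, map_der_mul,
      this, map_der_cm, zero_mul, mul_zero, add_zero, mul_zero, zero_mul, add_zero,
      zero_mul, zero_add, map_der_pow, der_XL_l]
    simp only [Finset.mul_sum, Finset.sum_mul, trace_sum]
    rw [Finset.sum_comm]
    simp only [mul_assoc]
  simp only [wordP, map_sum, e]
  simp only [trace_map_hom, map_mul_hom, map_pow_hom, eval_cm, eval_XL, eval_XR, crossW]
  calc _ = ∑ j, ∑ a ∈ Finset.range k, ∑ c ∈ Finset.range l, ∑ i, _ := by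
        refine Finset.sum_congr rfl fun j _ => ?_
        rw [Finset.sum_comm]
        refine Finset.sum_congr rfl fun a _ => ?_
        rw [Finset.sum_comm]
    _ = _ := by
        rw [Finset.sum_comm]
        refine Finset.sum_congr rfl fun a _ => ?_
        rw [Finset.sum_comm]
        refine Finset.sum_congr rfl fun c _ => ?_
        rw [Finset.sum_comm]

lemma word_zero (A : ι → Matrix n n ℝ) (B : Matrix n n ℝ) (k l : ℕ) :
    gE 0 (wordP A B k l) = E0 (word1 A B k l) := by
  rw [← gE_inl 0]
  simp only [gE, LinearMap.coe_mk, AddHom.coe_mk, eval_rename]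
  refine integral_congr_ae (ae_of_all _ fun g => ?_)
  have h1 : (fun j => rot 0 g (Sum.inr j)) = (fun j => rot 0 g (Sum.inl j)) := by
    ext j; simp [rot]
  have h2 : (rot 0 g ∘ Sum.inl) = (fun j => rot 0 g (Sum.inl j)) := rfl
  simp only [wordP, word1, map_sum, trace_map_hom, map_mul_hom, map_pow_hom, eval_cm, eval_XL,
    eval_XR, eval_XM, h1, h2]

lemma word_pihalf (A : ι → Matrix n n ℝ) (B : Matrix n n ℝ) (k l : ℕ) :
    gE (Real.pi / 2) (wordP A B k l) = ∑ i, (A i * MM A k * A i * MM A l * B).trace := by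
  simp only [wordP, map_sum]
  refine Finset.sum_congr rfl fun i _ => ?_
  simp only [trace, diag_apply, mul_apply, map_sum, Finset.sum_mul, XL_pow, XR_pow, map_apply, MM]
  refine Finset.sum_congr rfl fun a _ => Finset.sum_congr rfl fun b _ =>
    Finset.sum_congr rfl fun c _ => Finset.sum_congr rfl fun e _ => Finset.sum_congr rfl fun f _ => ?_
  have : (C (A i a f) * (rename Sum.inr) ((XM A ^ k) f e) * C (A i e c) *
      (rename Sum.inl) ((XM A ^ l) c b) * C (B b a) : MvPolynomial (ι ⊕ ι) ℝ)
      = (A i a f * A i e c * B b a) • ((rename Sum.inl) ((XM A ^ l) c b) *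
        (rename Sum.inr) ((XM A ^ k) f e)) := by
    rw [smul_eq_C_mul]; simp only [map_mul]; ring
  rw [this, map_smul, gE_pihalf, smul_eq_mul]
  ring

lemma decouple (A : ι → Matrix n n ℝ) (B : Matrix n n ℝ) (k l : ℕ) (G : MvPolynomial ι ℝ)
    (hG : ∀ h h' : ι → ℝ, ∀ a < k, ∀ c < l,
      |crossW A B (SM A h) (SM A h') a (k - 1 - a) c (l - 1 - c)| ≤ eval h G + eval h' G) :
    |E0 (word1 A B k l) - ∑ i, (A i * MM A k * A i * MM A l * B).trace|
      ≤ 4 * k * l * E0 G := by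
  rw [← word_zero, ← word_pihalf, abs_sub_comm]
  have hb : ∀ θ ∈ Set.Icc 0 (Real.pi / 2), ‖- Real.sin θ * gE θ (∑ j, pderiv (Sum.inl j) (pderiv (Sum.inr j) (wordP A B k l)))‖ ≤ 2 * k * l * E0 G := by
    intro θ _
    rw [norm_mul, norm_neg]
    have h1 : ‖Real.sin θ‖ ≤ 1 := Real.abs_sin_le_one θ
    have h2 : |gE θ (∑ j, pderiv (Sum.inl j) (pderiv (Sum.inr j) (wordP A B k l)))|
        ≤ gE θ (((k : ℝ) * l) • (rename Sum.inl G + rename Sum.inr G)) := by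
      apply gE_abs
      intro g
      rw [word_der]
      calc _ ≤ ∑ a ∈ Finset.range k, ∑ c ∈ Finset.range l,
            |crossW A B (SM A (fun j => rot θ g (Sum.inl j))) (SM A (fun j => rot θ g (Sum.inr j)))
              a (k - 1 - a) c (l - 1 - c)| := by
            refine (Finset.abs_sum_le_sum_abs _ _).trans (Finset.sum_le_sum fun a _ => ?_)
            exact Finset.abs_sum_le_sum_abs _ _
        _ ≤ ∑ a ∈ Finset.range k, ∑ c ∈ Finset.range l,
            (eval (fun j => rot θ g (Sum.inl j)) G + eval (fun j => rot θ g (Sum.inr j)) G) := by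
            refine Finset.sum_le_sum fun a ha => Finset.sum_le_sum fun c hc => ?_
            exact hG _ _ a (Finset.mem_range.1 ha) c (Finset.mem_range.1 hc)
        _ = _ := by
            simp only [Finset.sum_const, Finset.card_range, nsmul_eq_mul, smul_eval, map_add,
              eval_rename]
            rw [mul_assoc]; rfl
    rw [map_smul, map_add, gE_inl, gE_inr, smul_eq_mul] at h2
    calc _ ≤ 1 * _ := mul_le_mul_of_nonneg_right h1 (norm_nonneg _)
      _ ≤ _ := by rw [one_mul, Real.norm_eq_abs]; linarith
  have hb0 := hb 0 ⟨le_rfl, by positivity⟩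
  have := (convex_Icc (0 : ℝ) (Real.pi / 2)).norm_image_sub_le_of_norm_hasDerivWithin_le
    (fun θ _ => (gE_deriv (wordP A B k l) θ).hasDerivWithinAt) hb
    (x := 0) (y := Real.pi / 2) ⟨le_rfl, by positivity⟩ ⟨by positivity, le_rfl⟩
  rw [Real.norm_eq_abs] at this
  refine this.trans ?_
  have hn : 0 ≤ 2 * k * l * E0 G := (norm_nonneg _).trans hb0
  rw [sub_zero, Real.norm_eq_abs, abs_of_nonneg (by positivity)]
  nlinarith [Real.pi_le_four]
end mat

open MeasureTheory ProbabilityTheory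
set_option linter.unusedSectionVars false
section cross
open Matrix
variable {ι : Type*} [Fintype ι] {n : Type*} [Fintype n] [DecidableEq n]

/-- Frobenius-type bound for a family -/
def VB {a b : Type*} [Fintype a] [Fintype b] (T : ι → Matrix a b ℝ) (v2 : ℝ) : Prop :=
  ∀ c : ι → ℝ, ∑ x, ∑ y, (∑ i, c i * T i x y) ^ 2 ≤ v2 * ∑ i, c i ^ 2

def SB (A : ι → Matrix n n ℝ) (s2 : ℝ) : Prop :=
  ∀ x : n → ℝ, ∑ i, (A i *ᵥ x) ⬝ᵥ (A i *ᵥ x) ≤ s2 * (x ⬝ᵥ x)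

lemma half_vertex {E a b c : Type*} [Fintype E] [Fintype a] [Fintype b] [Fintype c]
    (P : ι → Matrix E a ℝ) (R : ι → Matrix b c ℝ) {v2 s2 : ℝ} (hv : 0 ≤ v2)
    (w : E → ℝ) (hw : ∀ e, 0 ≤ w e) (hR : VB R v2)
    (hP : ∀ e, ∑ i, ∑ x, P i e x ^ 2 ≤ s2) :
    ∑ e, ∑ x, ∑ y, ∑ z, w e * (∑ i, P i e x * R i y z) ^ 2 ≤ v2 * s2 * ∑ e, w e := by
  rw [Finset.mul_sum]
  refine Finset.sum_le_sum fun e _ => ?_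
  calc _ = w e * ∑ x, ∑ y, ∑ z, (∑ i, P i e x * R i y z) ^ 2 := by
        simp only [Finset.mul_sum]
    _ ≤ w e * ∑ x, v2 * ∑ i, P i e x ^ 2 := by
        refine mul_le_mul_of_nonneg_left (Finset.sum_le_sum fun x _ => hR _) (hw e)
    _ = w e * (v2 * ∑ i, ∑ x, P i e x ^ 2) := by
        rw [← Finset.mul_sum, Finset.sum_comm]
    _ ≤ w e * (v2 * s2) := by
        have := hP e; have := hw e; gcongr
    _ = _ := by ring

lemma vertex {E a b c : Type*} [Fintype E] [Fintype a] [Fintype b] [Fintype c]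
    (P : ι → Matrix E a ℝ) (Q : ι → Matrix a b ℝ) (R : ι → Matrix b c ℝ) (S : ι → Matrix c E ℝ)
    {v2 s2 : ℝ} (hv : 0 ≤ v2)
    (w : E → ℝ) (hw : ∀ e, 0 ≤ w e) (hR : VB R v2) (hQ : VB Q v2)
    (hP : ∀ e, ∑ i, ∑ x, P i e x ^ 2 ≤ s2) (hS : ∀ e, ∑ i, ∑ x, S i x e ^ 2 ≤ s2) :
    ∑ e, ∑ x, ∑ y, ∑ z, w e * (|∑ i, P i e x * R i y z| * |∑ j, Q j x y * S j z e|)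
      ≤ v2 * s2 * ∑ e, w e := by
  have h1 := half_vertex P R hv w hw hR hP
  have h2 := half_vertex (fun i => (S i)ᵀ) Q hv w hw hQ (by simpa using hS)
  have h3 : ∑ e, ∑ x, ∑ y, ∑ z, w e * (|∑ i, P i e x * R i y z| * |∑ j, Q j x y * S j z e|)
      ≤ ∑ e, ∑ x, ∑ y, ∑ z, (1 / 2 * (w e * (∑ i, P i e x * R i y z) ^ 2)
        + 1 / 2 * (w e * (∑ j, Q j x y * S j z e) ^ 2)) := by
    refine Finset.sum_le_sum fun e _ => Finset.sum_le_sum fun x _ => Finset.sum_le_sum fun y _ =>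
      Finset.sum_le_sum fun z _ => ?_
    have hwe := hw e
    have : |∑ i, P i e x * R i y z| * |∑ j, Q j x y * S j z e| ≤
      1 / 2 * (∑ i, P i e x * R i y z) ^ 2 + 1 / 2 * (∑ j, Q j x y * S j z e) ^ 2 := by
      rw [← sq_abs (∑ i, P i e x * R i y z), ← sq_abs (∑ j, Q j x y * S j z e)]
      nlinarith [sq_nonneg (|∑ i, P i e x * R i y z| - |∑ j, Q j x y * S j z e|)]
    nlinarith [mul_le_mul_of_nonneg_left this hwe]
  refine h3.trans ?_
  simp only [Finset.sum_add_distrib, ← Finset.mul_sum] at h1 h2 ⊢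
  have h4 : ∑ e, w e * ∑ x, ∑ y, ∑ z, (∑ j, Q j x y * S j z e) ^ 2
      = ∑ e, w e * ∑ z, ∑ x, ∑ y, (∑ j, (S j)ᵀ e z * Q j x y) ^ 2 := by
    refine Finset.sum_congr rfl fun e _ => ?_
    congr 1
    rw [Finset.sum_comm]
    refine (Finset.sum_congr rfl fun y _ => Finset.sum_comm).trans ?_
    rw [Finset.sum_comm]
    refine Finset.sum_congr rfl fun z _ => ?_
    rw [Finset.sum_comm]
    simp only [transpose_apply, mul_comm]
  rw [h4]
  linarith

lemma trace4 {E a b c : Type*} [Fintype E] [Fintype a] [Fintype b] [Fintype c]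
    (P : Matrix E a ℝ) (Q : Matrix a b ℝ) (R : Matrix b c ℝ) (S : Matrix c E ℝ) :
    (P * Q * R * S).trace = ∑ e, ∑ x, ∑ y, ∑ z, P e x * Q x y * R y z * S z e := by
  simp only [trace, diag_apply, Matrix.mul_apply, Finset.sum_mul]
  refine Finset.sum_congr rfl fun e _ => ?_
  refine (Finset.sum_congr rfl fun y _ => Finset.sum_comm).trans ?_
  rw [Finset.sum_comm]
  refine Finset.sum_congr rfl fun x _ => ?_
  rw [Finset.sum_comm]

lemma cross_expand {E a b c : Type*} [Fintype E] [Fintype a] [Fintype b] [Fintype c]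
    [DecidableEq E] [DecidableEq a] [DecidableEq b] [DecidableEq c]
    (P : ι → Matrix E a ℝ) (Q : ι → Matrix a b ℝ) (R : ι → Matrix b c ℝ) (S : ι → Matrix c E ℝ)
    (p : a → ℝ) (q : b → ℝ) (r : c → ℝ) (s : E → ℝ) :
    ∑ i, ∑ j, (P i * diagonal p * Q j * diagonal q * R i * diagonal r * S j * diagonal s).trace
      = ∑ e, ∑ x, ∑ y, ∑ z, (p x * q y * r z * s e) *
        ((∑ i, P i e x * R i y z) * (∑ j, Q j x y * S j z e)) := by
  have h : ∀ i j, (P i * diagonal p * Q j * diagonal q * R i * diagonal r * S j * diagonal s).trace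
     = ∑ e, ∑ x, ∑ y, ∑ z, (p x * q y * r z * s e) * ((P i e x * R i y z) * (Q j x y * S j z e)) := by
    intro i j
    have := trace4 (P i * diagonal p) (Q j * diagonal q) (R i * diagonal r) (S j * diagonal s)
    simp only [← Matrix.mul_assoc] at this
    rw [this]
    simp only [mul_diagonal]
    refine Finset.sum_congr rfl fun _ _ => Finset.sum_congr rfl fun _ _ =>
         Finset.sum_congr rfl fun _ _ => Finset.sum_congr rfl fun _ _ => ?_
    ring
  simp only [h]
  calc _ = ∑ i, ∑ e, ∑ x, ∑ y, ∑ z, ∑ j, (p x * q y * r z * s e) * ((P i e x * R i y z) * (Q j x y * S j z e)) := by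
        refine Finset.sum_congr rfl fun i _ => ?_
        rw [Finset.sum_comm]; refine Finset.sum_congr rfl fun _ _ => ?_
        rw [Finset.sum_comm]; refine Finset.sum_congr rfl fun _ _ => ?_
        rw [Finset.sum_comm]; refine Finset.sum_congr rfl fun _ _ => ?_
        rw [Finset.sum_comm]
    _ = ∑ e, ∑ x, ∑ y, ∑ z, ∑ i, ∑ j, (p x * q y * r z * s e) * ((P i e x * R i y z) * (Q j x y * S j z e)) := by
        rw [Finset.sum_comm]; refine Finset.sum_congr rfl fun _ _ => ?_
        rw [Finset.sum_comm]; refine Finset.sum_congr rfl fun _ _ => ?_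
        rw [Finset.sum_comm]; refine Finset.sum_congr rfl fun _ _ => ?_
        rw [Finset.sum_comm]
    _ = _ := by
        simp only [Finset.mul_sum, Finset.sum_mul]
        refine Finset.sum_congr rfl fun _ _ => Finset.sum_congr rfl fun _ _ =>
         Finset.sum_congr rfl fun _ _ => Finset.sum_congr rfl fun _ _ => ?_
        rw [Finset.sum_comm]

lemma cross_abs {E a b c : Type*} [Fintype E] [Fintype a] [Fintype b] [Fintype c]
    [DecidableEq E] [DecidableEq a] [DecidableEq b] [DecidableEq c]
    (P : ι → Matrix E a ℝ) (Q : ι → Matrix a b ℝ) (R : ι → Matrix b c ℝ) (S : ι → Matrix c E ℝ)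
    (p : a → ℝ) (q : b → ℝ) (r : c → ℝ) (s : E → ℝ) :
    |∑ i, ∑ j, (P i * diagonal p * Q j * diagonal q * R i * diagonal r * S j * diagonal s).trace|
      ≤ ∑ e, ∑ x, ∑ y, ∑ z, |p x * q y * r z * s e| *
        (|∑ i, P i e x * R i y z| * |∑ j, Q j x y * S j z e|) := by
  rw [cross_expand]
  refine (Finset.abs_sum_le_sum_abs _ _).trans (Finset.sum_le_sum fun _ _ => ?_)
  refine (Finset.abs_sum_le_sum_abs _ _).trans (Finset.sum_le_sum fun _ _ => ?_)
  refine (Finset.abs_sum_le_sum_abs _ _).trans (Finset.sum_le_sum fun _ _ => ?_)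
  refine (Finset.abs_sum_le_sum_abs _ _).trans (Finset.sum_le_sum fun _ _ => ?_)
  simp only [abs_mul, le_refl]

/-- crossing bound, single vertex -/
lemma cross_one {E a b c : Type*} [Fintype E] [Fintype a] [Fintype b] [Fintype c]
    [DecidableEq E] [DecidableEq a] [DecidableEq b] [DecidableEq c]
    (P : ι → Matrix E a ℝ) (Q : ι → Matrix a b ℝ) (R : ι → Matrix b c ℝ) (S : ι → Matrix c E ℝ)
    (p : a → ℝ) (q : b → ℝ) (r : c → ℝ) (s : E → ℝ)
    {v2 s2 : ℝ} (hv : 0 ≤ v2)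
    (w : E → ℝ) (hw : ∀ e, 0 ≤ w e) (hR : VB R v2) (hQ : VB Q v2)
    (hP : ∀ e, ∑ i, ∑ x, P i e x ^ 2 ≤ s2) (hS : ∀ e, ∑ i, ∑ x, S i x e ^ 2 ≤ s2)
    (hb : ∀ x y z e, |p x * q y * r z * s e| ≤ w e) :
    |∑ i, ∑ j, (P i * diagonal p * Q j * diagonal q * R i * diagonal r * S j * diagonal s).trace|
      ≤ v2 * s2 * ∑ e, w e := by
  refine (cross_abs P Q R S p q r s).trans ((?_ : _ ≤ _).trans (vertex P Q R S hv w hw hR hQ hP hS))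
  gcongr with e _ x _ y _ z _
  exact hb x y z e

/-- crossing bound, four vertices -/
lemma cross_four {E a b c : Type*} [Fintype E] [Fintype a] [Fintype b] [Fintype c]
    [DecidableEq E] [DecidableEq a] [DecidableEq b] [DecidableEq c]
    (P : ι → Matrix E a ℝ) (Q : ι → Matrix a b ℝ) (R : ι → Matrix b c ℝ) (S : ι → Matrix c E ℝ)
    (p : a → ℝ) (q : b → ℝ) (r : c → ℝ) (s : E → ℝ)
    {v2 s2 : ℝ} (hv : 0 ≤ v2)
    (w1 : a → ℝ) (w2 : b → ℝ) (w3 : c → ℝ) (w4 : E → ℝ)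
    (hw1 : ∀ e, 0 ≤ w1 e) (hw2 : ∀ e, 0 ≤ w2 e) (hw3 : ∀ e, 0 ≤ w3 e) (hw4 : ∀ e, 0 ≤ w4 e)
    (hP : VB P v2) (hQ : VB Q v2) (hR : VB R v2) (hS : VB S v2)
    (hPr : ∀ e, ∑ i, ∑ x, P i e x ^ 2 ≤ s2) (hPc : ∀ e, ∑ i, ∑ x, P i x e ^ 2 ≤ s2)
    (hQr : ∀ e, ∑ i, ∑ x, Q i e x ^ 2 ≤ s2) (hQc : ∀ e, ∑ i, ∑ x, Q i x e ^ 2 ≤ s2)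
    (hRr : ∀ e, ∑ i, ∑ x, R i e x ^ 2 ≤ s2) (hRc : ∀ e, ∑ i, ∑ x, R i x e ^ 2 ≤ s2)
    (hSr : ∀ e, ∑ i, ∑ x, S i e x ^ 2 ≤ s2) (hSc : ∀ e, ∑ i, ∑ x, S i x e ^ 2 ≤ s2)
    (hb : ∀ x y z e, |p x * q y * r z * s e| ≤ w1 x + w2 y + w3 z + w4 e) :
    |∑ i, ∑ j, (P i * diagonal p * Q j * diagonal q * R i * diagonal r * S j * diagonal s).trace|
      ≤ v2 * s2 * (∑ x, w1 x + ∑ y, w2 y + ∑ z, w3 z + ∑ e, w4 e) := by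
  refine (cross_abs P Q R S p q r s).trans ?_
  have v4 := vertex P Q R S hv w4 hw4 hR hQ hPr hSc
  have v1 := vertex Q R S P hv w1 hw1 hS hR hQr hPc
  have v2' := vertex R S P Q hv w2 hw2 hP hS hRr hQc
  have v3 := vertex S P Q R hv w3 hw3 hQ hP hSr hRc
  have e1 : ∑ x, ∑ y, ∑ z, ∑ e, w1 x * (|∑ i, Q i x y * S i z e| * |∑ j, R j y z * P j e x|)
      = ∑ e, ∑ x, ∑ y, ∑ z, w1 x *
        (|∑ i, P i e x * R i y z| * |∑ j, Q j x y * S j z e|) := by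
    symm
    rw [Finset.sum_comm]; refine Finset.sum_congr rfl fun x _ => ?_
    rw [Finset.sum_comm]; refine Finset.sum_congr rfl fun y _ => ?_
    rw [Finset.sum_comm]; refine Finset.sum_congr rfl fun z _ => ?_
    refine Finset.sum_congr rfl fun e _ => ?_
    rw [mul_comm |∑ i, Q i x y * S i z e|]; simp only [mul_comm]
  have e2 : ∑ y, ∑ z, ∑ e, ∑ x, w2 y * (|∑ i, R i y z * P i e x| * |∑ j, S j z e * Q j x y|)
      = ∑ e, ∑ x, ∑ y, ∑ z, w2 y *
        (|∑ i, P i e x * R i y z| * |∑ j, Q j x y * S j z e|) := by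
    refine (Finset.sum_congr rfl fun y _ => Finset.sum_comm).trans ?_
    rw [Finset.sum_comm]; refine Finset.sum_congr rfl fun e _ => ?_
    refine (Finset.sum_congr rfl fun y _ => Finset.sum_comm).trans ?_
    rw [Finset.sum_comm]; refine Finset.sum_congr rfl fun x _ => ?_
    refine Finset.sum_congr rfl fun y _ => Finset.sum_congr rfl fun z _ => ?_
    simp only [mul_comm]
  have e3 : ∑ z, ∑ e, ∑ x, ∑ y, w3 z * (|∑ i, S i z e * Q i x y| * |∑ j, P j e x * R j y z|)
      = ∑ e, ∑ x, ∑ y, ∑ z, w3 z *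
        (|∑ i, P i e x * R i y z| * |∑ j, Q j x y * S j z e|) := by
    rw [Finset.sum_comm]; refine Finset.sum_congr rfl fun e _ => ?_
    rw [Finset.sum_comm]; refine Finset.sum_congr rfl fun x _ => ?_
    rw [Finset.sum_comm]; refine Finset.sum_congr rfl fun y _ => ?_
    refine Finset.sum_congr rfl fun z _ => ?_
    rw [mul_comm |∑ i, S i z e * Q i x y|]; simp only [mul_comm]
  rw [e1] at v1; rw [e2] at v2'; rw [e3] at v3
  calc _ ≤ ∑ e, ∑ x, ∑ y, ∑ z, (w1 x + w2 y + w3 z + w4 e) *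
        (|∑ i, P i e x * R i y z| * |∑ j, Q j x y * S j z e|) := by
        gcongr with e _ x _ y _ z _
        exact hb x y z e
    _ ≤ _ := by
        simp only [add_mul, Finset.sum_add_distrib, mul_add]
        linarith

lemma row_bound {m : Type*} [Fintype m] [DecidableEq m] {A : ι → Matrix n n ℝ} {s2 : ℝ}
    (hS : SB A s2) (O : Matrix n n ℝ) (hO : O * Oᵀ = 1) (W : Matrix n m ℝ) (e : m) :
    ∑ i, ∑ x, (Oᵀ * A i * W) x e ^ 2 ≤ s2 * ∑ x, W x e ^ 2 := by
  have := hS (fun x => W x e)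
  simp only [dotProduct, ← pow_two] at this
  refine le_trans (le_of_eq ?_) this
  refine Finset.sum_congr rfl fun i _ => ?_
  have h1 : ∀ M : Matrix n m ℝ, ∑ x, M x e ^ 2 = (Mᵀ * M) e e := by
    intro M; simp [Matrix.mul_apply, pow_two]
  rw [h1]
  have h2 : (Oᵀ * A i * W)ᵀ * (Oᵀ * A i * W) = (A i * W)ᵀ * (A i * W) := by
    simp only [transpose_mul, transpose_transpose, Matrix.mul_assoc]
    rw [← Matrix.mul_assoc O, hO, Matrix.one_mul]
  rw [h2, ← h1]
  rfl

lemma VB_orth {A : ι → Matrix n n ℝ} {v2 : ℝ}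
    (hV : VB A v2) (O O' : Matrix n n ℝ) (hO : O * Oᵀ = 1) (hO' : O' * O'ᵀ = 1) :
    VB (fun i => Oᵀ * A i * O') v2 := by
  intro c
  refine le_trans (le_of_eq ?_) (hV c)
  have h1 : ∀ M : Matrix n n ℝ, ∑ x, ∑ y, M x y ^ 2 = (M * Mᵀ).trace := by
    intro M; simp [Matrix.mul_apply, pow_two, trace]
  have h3 : ∀ x y, ∑ i, c i * A i x y = SM A c x y := by
    intro x y; simp [SM, Matrix.sum_apply]
  have h2 : ∀ x y, ∑ i, c i * (Oᵀ * A i * O') x y = (Oᵀ * SM A c * O') x y := by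
    intro x y
    simp [SM, Matrix.sum_apply, Finset.mul_sum, Finset.sum_mul]
  simp only [h2, h3, h1]
  rw [transpose_mul, transpose_mul, transpose_transpose]
  rw [Matrix.mul_assoc _ O', ← Matrix.mul_assoc O', hO', Matrix.one_mul, Matrix.mul_assoc, trace_mul_comm,
    Matrix.mul_assoc, Matrix.mul_assoc, hO, Matrix.mul_one]

lemma diag_ex (X : Matrix n n ℝ) (hX : X.IsSymm) : ∃ (U : Matrix n n ℝ) (μ : n → ℝ),
    U * Uᵀ = 1 ∧ Uᵀ * U = 1 ∧ ∀ k : ℕ, X ^ k = U * diagonal (fun x => μ x ^ k) * Uᵀ := by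
  have hH : X.IsHermitian := by
    rw [Matrix.IsHermitian, conjTranspose_eq_transpose_of_trivial]; exact hX
  refine ⟨hH.eigenvectorUnitary, hH.eigenvalues, ?_, ?_, ?_⟩
  · have := (Matrix.mem_unitaryGroup_iff).1 hH.eigenvectorUnitary.2
    rwa [star_eq_conjTranspose, conjTranspose_eq_transpose_of_trivial] at this
  · have := (Matrix.mem_unitaryGroup_iff').1 hH.eigenvectorUnitary.2
    rwa [star_eq_conjTranspose, conjTranspose_eq_transpose_of_trivial] at this
  · intro k
    have h2 := (Matrix.mem_unitaryGroup_iff').1 hH.eigenvectorUnitary.2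
    have h1 := (Matrix.mem_unitaryGroup_iff).1 hH.eigenvectorUnitary.2
    rw [star_eq_conjTranspose, conjTranspose_eq_transpose_of_trivial] at h1 h2
    have hs := hH.spectral_theorem
    rw [Unitary.conjStarAlgAut_apply, star_eq_conjTranspose, conjTranspose_eq_transpose_of_trivial] at hs
    generalize (hH.eigenvectorUnitary : Matrix n n ℝ) = U at *
    generalize hH.eigenvalues = μ at *
    induction k with
    | zero => simp [h1]
    | succ k ih =>
      rw [pow_succ, ih]
      conv_lhs => rw [hs]
      have : U * diagonal (fun x => μ x ^ k) * Uᵀ * (U * diagonal (RCLike.ofReal ∘ μ) * Uᵀ)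
        = U * diagonal (fun x => μ x ^ k) * (Uᵀ * U) * diagonal (RCLike.ofReal ∘ μ) * Uᵀ := by
        simp only [Matrix.mul_assoc]
      rw [this, h2, Matrix.mul_one, Matrix.mul_assoc U, diagonal_mul_diagonal]
      rfl

lemma trace_diag (U : Matrix n n ℝ) (hU : Uᵀ * U = 1) (μ : n → ℝ) :
    (U * diagonal μ * Uᵀ).trace = ∑ x, μ x := by
  rw [trace_mul_comm, ← Matrix.mul_assoc, hU, Matrix.one_mul, trace_diagonal]

lemma four_max (x1 x2 x3 x4 : ℝ) (h1 : 0 ≤ x1) (h2 : 0 ≤ x2) (h3 : 0 ≤ x3) (h4 : 0 ≤ x4)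
    (a b c e : ℕ) : x1 ^ a * x2 ^ b * x3 ^ c * x4 ^ e ≤
      x1 ^ (a+b+c+e) + x2 ^ (a+b+c+e) + x3 ^ (a+b+c+e) + x4 ^ (a+b+c+e) := by
  have key : ∀ m, 0 ≤ m → x1 ≤ m → x2 ≤ m → x3 ≤ m → x4 ≤ m →
      x1 ^ a * x2 ^ b * x3 ^ c * x4 ^ e ≤ m ^ (a+b+c+e) := by
    intro m hm k1 k2 k3 k4
    rw [pow_add, pow_add, pow_add]
    gcongr
  have p1 := pow_nonneg h1 (a+b+c+e)
  have p2 := pow_nonneg h2 (a+b+c+e)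
  have p3 := pow_nonneg h3 (a+b+c+e)
  have p4 := pow_nonneg h4 (a+b+c+e)
  rcases le_total x1 x2 with h12 | h12 <;> rcases le_total x3 x4 with h34 | h34
  · rcases le_total x2 x4 with h | h
    · linarith [key x4 h4 (by linarith) (by linarith) (by linarith) (by linarith)]
    · linarith [key x2 h2 (by linarith) (by linarith) (by linarith) (by linarith)]
  · rcases le_total x2 x3 with h | h
    · linarith [key x3 h3 (by linarith) (by linarith) (by linarith) (by linarith)]
    · linarith [key x2 h2 (by linarith) (by linarith) (by linarith) (by linarith)]
  · rcases le_total x1 x4 with h | h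
    · linarith [key x4 h4 (by linarith) (by linarith) (by linarith) (by linarith)]
    · linarith [key x1 h1 (by linarith) (by linarith) (by linarith) (by linarith)]
  · rcases le_total x1 x3 with h | h
    · linarith [key x3 h3 (by linarith) (by linarith) (by linarith) (by linarith)]
    · linarith [key x1 h1 (by linarith) (by linarith) (by linarith) (by linarith)]

lemma col_one (U : Matrix n n ℝ) (hU : Uᵀ * U = 1) (e : n) : ∑ x, U x e ^ 2 = 1 := by
  have := congrFun (congrFun hU e) e
  simpa [Matrix.mul_apply, pow_two] using this

lemma cross_trace {A : ι → Matrix n n ℝ} {v2 s2 : ℝ} (hA : ∀ i, (A i).IsSymm) (hv : 0 ≤ v2)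
    (hS : SB A s2) (hV : VB A v2) (X Y : Matrix n n ℝ) (hX : X.IsSymm) (hY : Y.IsSymm)
    (a b c e : ℕ) (hM : Even (a + b + c + e)) :
    |crossW A 1 X Y a b c e| ≤ v2 * s2 * (2 * (X ^ (a+b+c+e)).trace + 2 * (Y ^ (a+b+c+e)).trace) := by
  obtain ⟨U, μ, hU, hU', hXU⟩ := diag_ex X hX
  obtain ⟨V, lam, hV1, hV', hYV⟩ := diag_ex Y hY
  have hcol : ∀ O O' : Matrix n n ℝ, O * Oᵀ = 1 → O'ᵀ * O' = 1 →
      ∀ e, ∑ i, ∑ x, (Oᵀ * A i * O') x e ^ 2 ≤ s2 := by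
    intro O O' h1 h2 e
    have := row_bound hS O h1 O' e
    rwa [col_one O' h2, mul_one] at this
  have hrow : ∀ O O' : Matrix n n ℝ, O' * O'ᵀ = 1 → Oᵀ * O = 1 →
      ∀ e, ∑ i, ∑ x, (Oᵀ * A i * O') e x ^ 2 ≤ s2 := by
    intro O O' h1 h2 e
    have := hcol O' O h1 h2 e
    refine le_trans (le_of_eq ?_) this
    refine Finset.sum_congr rfl fun i _ => Finset.sum_congr rfl fun x _ => ?_
    have : (O'ᵀ * A i * O)ᵀ = Oᵀ * A i * O' := by
      simp only [transpose_mul, transpose_transpose, (hA i).eq, Matrix.mul_assoc]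
    rw [← this]; rfl
  have h := cross_four (fun i => Uᵀ * A i * V) (fun i => Vᵀ * A i * V) (fun i => Vᵀ * A i * U)
    (fun i => Uᵀ * A i * U) (fun x => lam x ^ a) (fun x => lam x ^ b) (fun x => μ x ^ c)
    (fun x => μ x ^ e) hv (fun x => lam x ^ (a+b+c+e)) (fun x => lam x ^ (a+b+c+e))
    (fun x => μ x ^ (a+b+c+e)) (fun x => μ x ^ (a+b+c+e))
    (fun x => hM.pow_nonneg _) (fun x => hM.pow_nonneg _) (fun x => hM.pow_nonneg _)
    (fun x => hM.pow_nonneg _)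
    (VB_orth hV U V hU hV1) (VB_orth hV V V hV1 hV1) (VB_orth hV V U hV1 hU) (VB_orth hV U U hU hU)
    (hrow U V hV1 hU') (hcol U V hU hV') (hrow V V hV1 hV') (hcol V V hV1 hV')
    (hrow V U hU hV') (hcol V U hV1 hU') (hrow U U hU hU') (hcol U U hU hU')
    (by
      intro x y z w
      rw [abs_mul, abs_mul, abs_mul, abs_pow, abs_pow, abs_pow, abs_pow,
        ← hM.pow_abs (lam x), ← hM.pow_abs (lam y), ← hM.pow_abs (μ z), ← hM.pow_abs (μ w)]
      exact four_max _ _ _ _ (abs_nonneg _) (abs_nonneg _) (abs_nonneg _) (abs_nonneg _) a b c e)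
  rw [hXU (a+b+c+e), hYV (a+b+c+e), trace_diag U hU', trace_diag V hV']
  have e1 : crossW A 1 X Y a b c e = ∑ i, ∑ j, ((Uᵀ * A i * V) * diagonal (fun x => lam x ^ a) *
      (Vᵀ * A j * V) * diagonal (fun x => lam x ^ b) * (Vᵀ * A i * U) * diagonal (fun x => μ x ^ c)
      * (Uᵀ * A j * U) * diagonal (fun x => μ x ^ e)).trace := by
    unfold crossW
    refine Finset.sum_congr rfl fun i _ => Finset.sum_congr rfl fun j _ => ?_
    rw [Matrix.mul_one, hYV a, hYV b, hXU c, hXU e]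
    conv_rhs => simp only [Matrix.mul_assoc]
    rw [trace_mul_comm Uᵀ]
    simp only [Matrix.mul_assoc]
  rw [e1]
  refine h.trans (le_of_eq ?_)
  ring

end cross

open MeasureTheory ProbabilityTheory
set_option linter.unusedSectionVars false
section cross2
open Matrix
variable {ι : Type*} [Fintype ι] {n : Type*} [Fintype n] [DecidableEq n]

lemma exists_ell (μ lam : n → ℝ) (r : ℝ) (hr : 0 < r) (P M : ℕ) (hM : M ≤ 2 * P) :
    ∃ ℓ, 0 < ℓ ∧ (∀ x, |μ x| ≤ ℓ) ∧ (∀ x, |lam x| ≤ ℓ) ∧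
      ℓ ^ M ≤ r ^ M * (1 + (∑ x, μ x ^ (2 * P)) / r ^ (2 * P) + (∑ x, lam x ^ (2 * P)) / r ^ (2 * P)) := by
  let f : Option (n ⊕ n) → ℝ := fun o => match o with
    | none => r
    | some (Sum.inl x) => |μ x|
    | some (Sum.inr x) => |lam x|
  obtain ⟨o, ho⟩ := Finite.exists_max f
  have hr' : r ≤ f o := ho none
  have h1 : ∀ ν : n → ℝ, 0 ≤ ∑ x, ν x ^ (2 * P) := fun ν =>
    Finset.sum_nonneg fun x _ => (even_two_mul P).pow_nonneg _
  have h2 : ∀ (ν : n → ℝ), 0 ≤ (∑ x, ν x ^ (2 * P)) / r ^ (2 * P) := fun ν =>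
    div_nonneg (h1 ν) (by positivity)
  have h3 : ∀ (ν : n → ℝ) (x : n), r ≤ |ν x| →
      |ν x| ^ M ≤ r ^ M * ((∑ x, ν x ^ (2 * P)) / r ^ (2 * P)) := by
    intro ν x hx
    have e1 : |ν x| ^ M = r ^ M * (|ν x| / r) ^ M := by
      rw [div_pow]; field_simp
    rw [e1]
    gcongr
    have : 1 ≤ |ν x| / r := by rwa [le_div_iff₀ hr, one_mul]
    refine (pow_le_pow_right₀ this hM).trans ?_
    rw [div_pow, (even_two_mul P).pow_abs]
    gcongr
    exact Finset.single_le_sum (f := fun x => ν x ^ (2 * P))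
      (fun x _ => (even_two_mul P).pow_nonneg _) (Finset.mem_univ x)
  refine ⟨f o, hr.trans_le hr', fun x => ho (some (Sum.inl x)), fun x => ho (some (Sum.inr x)), ?_⟩
  have hrM : 0 < r ^ M := by positivity
  have hμ := h2 μ
  have hl := h2 lam
  match o, hr' with
  | none, _ => 
    show r ^ M ≤ _
    nlinarith [mul_nonneg hrM.le hμ, mul_nonneg hrM.le hl]
  | some (Sum.inl x), hr' =>
    have := h3 μ x hr'
    show |μ x| ^ M ≤ _
    nlinarith [mul_nonneg hrM.le hμ, mul_nonneg hrM.le hl]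
  | some (Sum.inr x), hr' =>
    have := h3 lam x hr'
    show |lam x| ^ M ≤ _
    nlinarith [mul_nonneg hrM.le hμ, mul_nonneg hrM.le hl]

/-- diag conj contracts -/
lemma conj_norm (U : Matrix n n ℝ) (hU : U * Uᵀ = 1) (hU' : Uᵀ * U = 1) (m : n → ℝ) (ℓ : ℝ)
    (hm : ∀ x, |m x| ≤ ℓ) (y : n → ℝ) :
    ∑ x, ((U * diagonal m * Uᵀ) *ᵥ y) x ^ 2 ≤ ℓ ^ 2 * ∑ x, y x ^ 2 := by
  have h1 : ∀ (O : Matrix n n ℝ) (hO : Oᵀ * O = 1) (z : n → ℝ), ∑ x, (O *ᵥ z) x ^ 2 = ∑ x, z x ^ 2 := by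
    intro O hO z
    have e : ∀ z : n → ℝ, ∑ x, z x ^ 2 = z ⬝ᵥ z := by intro z; simp [dotProduct, pow_two]
    rw [e, e, dotProduct_mulVec, ← mulVec_transpose, mulVec_mulVec, hO, one_mulVec]
  rw [Matrix.mul_assoc, ← mulVec_mulVec, h1 U hU', ← mulVec_mulVec]
  rw [← h1 Uᵀ (by simpa using hU) y, Finset.mul_sum]
  refine Finset.sum_le_sum fun x _ => ?_
  rw [mulVec_diagonal, mul_pow, ← sq_abs (m x)]
  gcongr
  exact hm x

lemma cross_rank {A : ι → Matrix n n ℝ} {v2 s2 : ℝ} (hA : ∀ i, (A i).IsSymm) (hv : 0 ≤ v2)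
    (hs : 0 ≤ s2)
    (hS : SB A s2) (hV : VB A v2) (X Y : Matrix n n ℝ) (hX : X.IsSymm) (hY : Y.IsSymm)
    (x y : n → ℝ) (hx : ∑ i, x i ^ 2 ≤ 1) (hy : ∑ i, y i ^ 2 ≤ 1)
    (a b c e P : ℕ) (hM : a + b + c + e ≤ 2 * P) (r : ℝ) (hr : 0 < r) :
    |crossW A (vecMulVec y x) X Y a b c e| ≤ v2 * s2 * (r ^ (a+b+c+e) *
      (1 + (X ^ (2 * P)).trace / r ^ (2 * P) + (Y ^ (2 * P)).trace / r ^ (2 * P))) := by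
  obtain ⟨U, μ, hU, hU', hXU⟩ := diag_ex X hX
  obtain ⟨V, lam, hV1, hV', hYV⟩ := diag_ex Y hY
  rw [hXU (2 * P), hYV (2 * P), trace_diag U hU', trace_diag V hV']
  obtain ⟨ℓ, hℓ, hμ, hlam, hle⟩ := exists_ell μ lam r hr P _ hM
  refine le_trans ?_ (mul_le_mul_of_nonneg_left hle (mul_nonneg hv hs))
  let Wx : Matrix n Unit ℝ := fun i _ => x i
  let Wy : Matrix n Unit ℝ := fun i _ => (ℓ ^ e)⁻¹ * (X ^ e *ᵥ y) i
  have h := cross_one (fun i => Wxᵀ * A i * V) (fun i => Vᵀ * A i * V) (fun i => Vᵀ * A i * U)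
    (fun i => Uᵀ * A i * Wy) (fun x => lam x ^ a) (fun x => lam x ^ b) (fun x => μ x ^ c)
    (fun _ => ℓ ^ e) hv (s2 := s2) (fun _ => ℓ ^ (a+b+c+e)) (fun _ => by positivity)
    (VB_orth hV V U hV1 hU) (VB_orth hV V V hV1 hV1)
    (by
      intro u
      have := row_bound hS V hV1 Wx u
      refine le_trans (le_of_eq ?_) (this.trans (by nlinarith [show ∑ i, Wx i u ^ 2 ≤ 1 from hx]))
      refine Finset.sum_congr rfl fun i _ => Finset.sum_congr rfl fun z _ => ?_
      have : (Vᵀ * A i * Wx)ᵀ = Wxᵀ * A i * V := by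
        simp only [transpose_mul, transpose_transpose, (hA i).eq, Matrix.mul_assoc]
      rw [← this]; rfl)
    (by
      intro u
      have h1 := row_bound hS U hU Wy u
      have h2 : ∑ x, Wy x u ^ 2 ≤ 1 := by
        simp only [Wy, mul_pow, ← Finset.mul_sum]
        have := conj_norm U hU hU' (fun x => μ x ^ e) (ℓ ^ e) (fun x => by
          rw [abs_pow]; gcongr; exact hμ x) y
        rw [← hXU e] at this
        have h3 : ∑ z, (X ^ e *ᵥ y) z ^ 2 ≤ (ℓ ^ e) ^ 2 := this.trans (by nlinarith [sq_nonneg (ℓ ^ e)])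
        rw [inv_pow, inv_mul_le_iff₀ (by positivity), mul_one]
        exact h3
      nlinarith)
    (by
      intro x' y' z' w'
      rw [abs_mul, abs_mul, abs_mul, abs_pow, abs_pow, abs_pow, abs_pow, pow_add, pow_add, pow_add,
        abs_of_pos hℓ]
      have := hlam x'; have := hlam y'; have := hμ z'
      gcongr)
  have e1 : crossW A (vecMulVec y x) X Y a b c e = ∑ i, ∑ j, ((Wxᵀ * A i * V) * diagonal (fun x => lam x ^ a) *
      (Vᵀ * A j * V) * diagonal (fun x => lam x ^ b) * (Vᵀ * A i * U) * diagonal (fun x => μ x ^ c)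
      * (Uᵀ * A j * Wy) * diagonal (fun _ => ℓ ^ e)).trace := by
    unfold crossW
    refine Finset.sum_congr rfl fun i _ => Finset.sum_congr rfl fun j _ => ?_
    have hW : Wy * diagonal (fun _ : Unit => ℓ ^ e) * Wxᵀ = X ^ e * vecMulVec y x := by
      ext p q
      have h1 : (Wy * diagonal (fun _ : Unit => ℓ ^ e)) p () = (X ^ e *ᵥ y) p := by
        rw [mul_diagonal]
        show (ℓ ^ e)⁻¹ * (X ^ e *ᵥ y) p * ℓ ^ e = _
        field_simp
      rw [Matrix.mul_apply, Fintype.sum_unique]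
      show (Wy * diagonal (fun _ : Unit => ℓ ^ e)) p () * x q = _
      rw [h1, Matrix.mul_apply]
      simp only [mulVec, dotProduct, vecMulVec_apply, Finset.sum_mul]
      simp only [mul_assoc]
    rw [Matrix.mul_assoc _ (X ^ e), ← hW, hYV a, hYV b, hXU c]
    conv_rhs => simp only [Matrix.mul_assoc]
    rw [trace_mul_comm Wxᵀ]
    simp only [Matrix.mul_assoc]
  rw [e1]
  refine h.trans (le_of_eq ?_)
  simp
end cross2

section numeric

lemma catalan_le (k : ℕ) : (catalan k : ℝ) ≤ 4 ^ k := by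
  have h : catalan k ≤ 4 ^ k := by
    rw [catalan_eq_centralBinom_div]
    refine (Nat.div_le_self _ _).trans ?_
    exact (Nat.centralBinom_le_four_pow k)
  exact_mod_cast h

lemma catalan_pos' (k : ℕ) : (1 : ℝ) ≤ catalan k := by
  have h : 1 ≤ catalan k := by
    have := succ_mul_catalan_eq_centralBinom k
    have h2 := Nat.centralBinom_pos k
    rcases Nat.eq_zero_or_pos (catalan k) with h | h
    · rw [h] at this; omega
    · exact h
  exact_mod_cast h

lemma q_bound (P : ℕ) (k0 : ℕ) (hk0 : 64 ^ k0 ≤ 64 * P) (hk0P : k0 < P) (s2 v2 D2 u : ℝ) (hu : 0 < u)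
    (hs2 : 0 ≤ s2) (hsD : s2 ≤ D2) (hvD : (P : ℝ) ^ 3 * v2 * s2 ≤ D2 ^ 2)
    (hD : 1024 * D2 ≤ u) (q : ℕ → ℝ) (hq : ∀ k, 0 ≤ q k) (hq0 : q 0 ≤ 1)
    (hrec : ∀ k < P, q (k + 1) ≤ s2 * ∑ b ∈ Finset.range (k + 1), q b * q (k - b)
      + 12 * (k + 1 : ℝ) ^ 3 * v2 * s2 * ((2 * u) ^ (k + 1) / (2 * u) ^ 2)) :
    ∀ k ≤ k0, q k ≤ catalan k * (u / 256) ^ k := by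
  intro k
  induction k using Nat.strong_induction_on with
  | _ k ih =>
  intro hk
  rcases k with _ | k
  · simpa using hq0
  have hD0 : 0 ≤ D2 := hs2.trans hsD
  have hP : (1 : ℝ) ≤ P := by exact_mod_cast (by omega : 1 ≤ P)
  refine (hrec k (by omega)).trans ?_
  have h1 : ∑ b ∈ Finset.range (k + 1), q b * q (k - b) ≤ catalan (k + 1) * (u / 256) ^ k := by
    rw [catalan_succ', Finset.Nat.sum_antidiagonal_eq_sum_range_succ_mk]
    push_cast
    rw [Finset.sum_mul]
    refine Finset.sum_le_sum fun b hb => ?_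
    have hb' : b ≤ k := by have := Finset.mem_range.1 hb; omega
    have i1 := ih b (by omega) (by omega)
    have i2 := ih (k - b) (by omega) (by omega)
    calc _ ≤ (catalan b * (u / 256) ^ b) * (catalan (k - b) * (u / 256) ^ (k - b)) :=
          mul_le_mul i1 i2 (hq _) (by positivity)
      _ = catalan b * catalan (k - b) * ((u / 256) ^ b * (u / 256) ^ (k - b)) := by ring
      _ = _ := by rw [← pow_add, Nat.add_sub_cancel' hb']
  have h2 : 12 * (k + 1 : ℝ) ^ 3 * v2 * s2 * ((2 * u) ^ (k + 1) / (2 * u) ^ 2)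
      ≤ 1 / 2 * (u / 256) ^ (k + 1) := by
    have hk3 : (k + 1 : ℝ) ^ 3 ≤ 8 ^ (k + 1) := by
      have : (k + 1 : ℝ) ≤ 2 ^ (k + 1) := by exact_mod_cast (Nat.lt_two_pow_self (n := k + 1)).le
      calc _ ≤ ((2 : ℝ) ^ (k + 1)) ^ 3 := by gcongr
        _ = (2 ^ 3) ^ (k + 1) := by rw [← pow_mul, ← pow_mul, mul_comm]
        _ = _ := by norm_num
    have hvs : v2 * s2 ≤ D2 ^ 2 / P ^ 3 := by
      rw [le_div_iff₀ (by positivity)]; linarith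
    have hDD : D2 ^ 2 ≤ (u / 1024) ^ 2 := by
      gcongr; linarith
    have h64 : ((4096 : ℝ)) ^ (k + 1) ≤ 4096 * P ^ 3 := by
      have : 64 ^ (k + 1) ≤ 64 * P := le_trans (Nat.pow_le_pow_right (by norm_num) hk) hk0
      have : (64 : ℝ) ^ (k + 1) ≤ 64 * P := by exact_mod_cast this
      calc (4096 : ℝ) ^ (k + 1) = (64 ^ (k + 1)) ^ 2 := by
            rw [← pow_mul, mul_comm, pow_mul]; norm_num
        _ ≤ (64 * P) ^ 2 := by gcongr
        _ = 4096 * P ^ 2 := by ring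
        _ ≤ _ := by gcongr <;> norm_num
    calc _ = 12 * (k + 1 : ℝ) ^ 3 * (v2 * s2) * ((2 * u) ^ (k + 1) / (2 * u) ^ 2) := by ring
      _ ≤ 12 * 8 ^ (k + 1) * ((u / 1024) ^ 2 / P ^ 3) * ((2 * u) ^ (k + 1) / (2 * u) ^ 2) := by
          have : v2 * s2 ≤ (u / 1024) ^ 2 / P ^ 3 := hvs.trans (by gcongr)
          have e1 : 12 * (k + 1 : ℝ) ^ 3 * (v2 * s2) ≤ 12 * (k + 1 : ℝ) ^ 3 * ((u / 1024) ^ 2 / P ^ 3) := by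
            gcongr
          refine (mul_le_mul_of_nonneg_right e1 (by positivity)).trans ?_
          gcongr
      _ = (3 / 1024 ^ 2 / P ^ 3) * (4096 ^ (k + 1) * (u / 256) ^ (k + 1)) := by
          have : (4096 : ℝ) ^ (k + 1) * (u / 256) ^ (k + 1) = 8 ^ (k + 1) * (2 * u) ^ (k + 1) := by
            rw [← mul_pow, ← mul_pow]; congr 1; ring
          rw [this]
          field_simp
          norm_num
      _ ≤ (3 / 1024 ^ 2 / P ^ 3) * ((4096 * P ^ 3) * (u / 256) ^ (k + 1)) := by gcongr
      _ = (3 * 4096 / 1024 ^ 2) * (u / 256) ^ (k + 1) := by field_simp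
      _ ≤ _ := mul_le_mul_of_nonneg_right (by norm_num) (by positivity)
  have h3 : s2 ≤ (u / 256) / 4 := by linarith
  have hc := catalan_pos' (k + 1)
  have hp : 0 < (u / 256) ^ (k + 1) := by positivity
  calc _ ≤ ((u / 256) / 4) * (catalan (k + 1) * (u / 256) ^ k) + 1 / 2 * (u / 256) ^ (k + 1) := by
        refine add_le_add ((mul_le_mul_of_nonneg_left h1 hs2).trans ?_) h2
        gcongr
    _ = 1 / 4 * (catalan (k + 1) * (u / 256) ^ (k + 1)) + 1 / 2 * (1 * (u / 256) ^ (k + 1)) := by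
        ring
    _ ≤ 1 / 4 * (catalan (k + 1) * (u / 256) ^ (k + 1)) + 1 / 2 * (catalan (k + 1) * (u / 256) ^ (k + 1)) := by
        gcongr
    _ ≤ _ := by nlinarith

lemma numeric_core (P : ℕ) (hP : 2 ≤ P) (s2 v2 D2 u d : ℝ) (hu : 0 < u) (hd : 0 < d)
    (hs2 : 0 ≤ s2) (hsD : s2 ≤ D2) (hvD : (P : ℝ) ^ 3 * v2 * s2 ≤ D2 ^ 2)
    (hD : 1024 * D2 ≤ u) (q t φ : ℕ → ℝ) (hq : ∀ k, 0 ≤ q k) (hq0 : q 0 ≤ 1)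
    (hrec : ∀ k < P, q (k + 1) ≤ s2 * ∑ b ∈ Finset.range (k + 1), q b * q (k - b)
      + 12 * (k + 1 : ℝ) ^ 3 * v2 * s2 * ((2 * u) ^ (k + 1) / (2 * u) ^ 2))
    (htP : t P = d * u ^ P)
    (ht : ∀ j ≤ P, t j ≤ 2 * d * u ^ j) (ht0 : ∀ j, 0 ≤ t j)
    (hmain : t P ≤ ∑ j ∈ Finset.range P, φ j + 16 * P ^ 3 * v2 * s2 * t (P - 2))
    (hφ : ∀ j < P, φ j ≤ s2 * q j * t (P - 1 - j))
    (hsym : ∀ j < P, φ j = φ (P - 1 - j))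
    (hmid : ∀ k j, k ≤ j → j + k ≤ P - 1 → φ j ≤ 2 * φ k) : False := by
  have hD0 : 0 ≤ D2 := hs2.trans hsD
  have hPR : (2 : ℝ) ≤ P := by exact_mod_cast hP
  set k0 := Nat.clog 64 P with hk0
  have h1 : P ≤ 64 ^ k0 := Nat.le_pow_clog (by norm_num) P
  have h2 : 64 ^ k0 ≤ 64 * P := by
    have h3 := Nat.pow_pred_clog_lt_self (b := 64) (by norm_num) (x := P) (by omega)
    have h4 : 0 < k0 := Nat.clog_pos (by norm_num) hP
    obtain ⟨m, hm⟩ : ∃ m, k0 = m + 1 := ⟨k0 - 1, by omega⟩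
    rw [← hk0, hm] at h3
    rw [hm, pow_succ]
    simp at h3
    omega
  have h5 : k0 ≤ P - 1 := by
    apply Nat.clog_le_of_le_pow
    have : ∀ m : ℕ, m + 2 ≤ 64 ^ (m + 1) := by
      intro m
      induction m with
      | zero => norm_num
      | succ m ih => rw [pow_succ]; omega
    have := this (P - 2)
    rwa [show P - 2 + 2 = P by omega, show P - 2 + 1 = P - 1 by omega] at this
  have hqb := q_bound P k0 h2 (by omega) s2 v2 D2 u hu hs2 hsD hvD hD q hq hq0 hrec
  have htpos : 0 < t P := by rw [htP]; positivity
  have hψ : ∀ j ≤ k0, φ j ≤ 2 / 1024 * (1 / 64) ^ j * t P := by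
    intro j hj
    calc φ j ≤ s2 * q j * t (P - 1 - j) := hφ j (by omega)
      _ ≤ (u / 1024) * (4 ^ j * (u / 256) ^ j) * (2 * d * u ^ (P - 1 - j)) := by
          have a1 : s2 ≤ u / 1024 := by linarith
          have a2 : q j ≤ 4 ^ j * (u / 256) ^ j := (hqb j hj).trans (by
            gcongr; exact catalan_le j)
          have a3 := ht (P - 1 - j) (by omega)
          have := hq j
          have := ht0 (P - 1 - j)
          gcongr
      _ = 2 / 1024 * (1 / 64) ^ j * (d * (u ^ (P - 1 - j) * u ^ j * u)) := by
          rw [← mul_pow, show 4 * (u / 256) = 1 / 64 * u by ring, mul_pow]; ring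
      _ = _ := by rw [← pow_add, ← pow_succ, htP]; congr 3; congr 1; omega
  have hall : ∀ j ∈ Finset.range P, φ j ≤ 2 / 1024 * (1 / 64) ^ j * t P
      + 2 / 1024 * (1 / 64) ^ (P - 1 - j) * t P + 4 / 1024 * (1 / P) * t P := by
    intro j hj
    have hj := Finset.mem_range.1 hj
    have p1 : 0 ≤ 2 / 1024 * (1 / 64) ^ j * t P := by positivity
    have p2 : 0 ≤ 2 / 1024 * (1 / 64) ^ (P - 1 - j) * t P := by positivity
    have p3 : 0 ≤ 4 / 1024 * (1 / P) * t P := by positivity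
    by_cases c1 : j ≤ k0
    · linarith [hψ j c1]
    by_cases c2 : P - 1 - j ≤ k0
    · linarith [hψ _ c2, hsym j hj]
    have m := hmid k0 j (by omega) (by omega)
    have m2 := hψ k0 le_rfl
    have : ((1 : ℝ) / 64) ^ k0 ≤ 1 / P := by
      rw [div_pow, one_pow]
      apply one_div_le_one_div_of_le (by positivity)
      exact_mod_cast h1
    have : 2 / 1024 * (1 / 64) ^ k0 * t P ≤ 2 / 1024 * (1 / P) * t P := by gcongr
    linarith
  have hgeo : ∑ j ∈ Finset.range P, ((1 : ℝ) / 64) ^ j ≤ 2 := by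
    rw [geom_sum_eq (by norm_num)]
    have : (0 : ℝ) ≤ (1 / 64) ^ P := by positivity
    rw [div_le_iff_of_neg (by norm_num)]
    linarith
  have hgeo2 : ∑ j ∈ Finset.range P, ((1 : ℝ) / 64) ^ (P - 1 - j) ≤ 2 := by
    rw [Finset.sum_range_reflect (fun j => ((1 : ℝ) / 64) ^ j) P]; exact hgeo
  have hsum := Finset.sum_le_sum hall
  rw [Finset.sum_add_distrib, Finset.sum_add_distrib, ← Finset.sum_mul, ← Finset.mul_sum,
    ← Finset.sum_mul, ← Finset.mul_sum, Finset.sum_const, Finset.card_range, nsmul_eq_mul] at hsum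
  have hlast : (P : ℝ) * (4 / 1024 * (1 / P) * t P) = 4 / 1024 * t P := by field_simp
  have herr : 16 * P ^ 3 * v2 * s2 * t (P - 2) ≤ 32 / 1024 ^ 2 * t P := by
    have a3 := ht (P - 2) (by omega)
    have hDD : D2 ^ 2 ≤ (u / 1024) ^ 2 := by
      gcongr; linarith
    have := ht0 (P - 2)
    calc 16 * P ^ 3 * v2 * s2 * t (P - 2) = 16 * (P ^ 3 * v2 * s2) * t (P - 2) := by ring
      _ ≤ 16 * (u / 1024) ^ 2 * (2 * d * u ^ (P - 2)) := by
          have := hvD.trans hDD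
          gcongr
      _ = 32 / 1024 ^ 2 * (d * (u ^ (P - 2) * u ^ 2)) := by ring
      _ = _ := by rw [← pow_add, htP]; congr 3; omega
  rw [hlast] at hsum
  have g1 : 2 / 1024 * (∑ j ∈ Finset.range P, ((1 : ℝ) / 64) ^ j) * t P ≤ 2 / 1024 * 2 * t P := by
    gcongr
  have g2 : 2 / 1024 * (∑ j ∈ Finset.range P, ((1 : ℝ) / 64) ^ (P - 1 - j)) * t P ≤ 2 / 1024 * 2 * t P := by
    gcongr
  norm_num at *
  linarith
end numeric

open MeasureTheory ProbabilityTheory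
set_option linter.unusedSectionVars false
section recur
open Matrix MvPolynomial
open scoped Matrix.Norms.L2Operator
variable {ι : Type*} [Fintype ι] {n : Type*} [Fintype n] [DecidableEq n]

lemma SM_symm {A : ι → Matrix n n ℝ} (hA : ∀ i, (A i).IsSymm) (g : ι → ℝ) : (SM A g).IsSymm := by
  simp only [Matrix.IsSymm, SM, transpose_sum, transpose_smul, (hA _).eq]

lemma eval_pow_entry (A : ι → Matrix n n ℝ) (g : ι → ℝ) (k : ℕ) (x y : n) :
    eval g ((XM A ^ k) x y) = (SM A g ^ k) x y := by
  rw [← eval_XM, ← map_pow_hom]; rfl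

lemma eval_tr (A : ι → Matrix n n ℝ) (g : ι → ℝ) (k : ℕ) :
    eval g ((XM A ^ k).trace) = (SM A g ^ k).trace := by
  rw [trace_map_hom, map_pow_hom, eval_XM]

lemma MM_zero (A : ι → Matrix n n ℝ) : MM A 0 = 1 := by
  ext x y
  simp only [MM, pow_zero, map_apply, Matrix.one_apply]
  split_ifs
  · simpa using E0_C (ι := ι) 1
  · simp

lemma MM_odd (A : ι → Matrix n n ℝ) (k : ℕ) : MM A (2 * k + 1) = 0 := by
  ext x y
  simp only [MM, map_apply, Matrix.zero_apply]
  apply E0_odd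
  intro g
  have : SM A (-g) = - SM A g := by simp [SM, Finset.sum_neg_distrib]
  rw [eval_pow_entry, eval_pow_entry, this, Odd.neg_pow ⟨k, rfl⟩]; rfl

lemma E0_tr (A : ι → Matrix n n ℝ) (B : Matrix n n ℝ) (k : ℕ) :
    E0 (XM A ^ k * cm B).trace = (MM A k * B).trace := by
  simp only [trace, diag_apply, Matrix.mul_apply, map_sum, map_apply, MM]
  refine Finset.sum_congr rfl fun x _ => Finset.sum_congr rfl fun y _ => ?_
  rw [mul_comm _ (C _), ← smul_eq_C_mul, map_smul, smul_eq_mul, mul_comm]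

lemma sum_even (f : ℕ → ℝ) (hf : ∀ b, f (2 * b + 1) = 0) (k : ℕ) :
    ∑ m ∈ Finset.range (2 * k + 1), f m = ∑ b ∈ Finset.range (k + 1), f (2 * b) := by
  induction k with
  | zero => simp
  | succ k ih =>
    rw [show 2 * (k + 1) + 1 = 2 * k + 1 + 1 + 1 by ring, Finset.sum_range_succ, Finset.sum_range_succ, ih,
      hf, Finset.sum_range_succ _ (k + 1)]
    simp; congr 1

lemma dot_le (M : Matrix n n ℝ) (x y : n → ℝ) :
    |x ⬝ᵥ (M *ᵥ y)| ≤ ‖M‖ * ((x ⬝ᵥ x + y ⬝ᵥ y) / 2) := by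
  have hn : ∀ z : n → ℝ, ‖(WithLp.toLp 2 z : EuclideanSpace ℝ n)‖ ^ 2 = z ⬝ᵥ z := by
    intro z; rw [EuclideanSpace.real_norm_sq_eq]; simp [dotProduct, pow_two]
  have h1 := Matrix.l2_opNorm_mulVec M (WithLp.toLp 2 y)
  have h2 := abs_real_inner_le_norm (WithLp.toLp 2 x : EuclideanSpace ℝ n) (WithLp.toLp 2 (M *ᵥ y))
  have h3 : inner ℝ (WithLp.toLp 2 x : EuclideanSpace ℝ n) (WithLp.toLp 2 (M *ᵥ y)) = x ⬝ᵥ (M *ᵥ y) := by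
    rw [EuclideanSpace.inner_toLp_toLp, dotProduct_comm]; simp
  rw [h3] at h2
  refine h2.trans ?_
  rw [← hn, ← hn]
  have h1' : ‖(WithLp.toLp 2 (M *ᵥ y) : EuclideanSpace ℝ n)‖ ≤ ‖M‖ * ‖(WithLp.toLp 2 y : EuclideanSpace ℝ n)‖ := h1
  have hM := norm_nonneg M
  have hx := norm_nonneg (WithLp.toLp 2 x : EuclideanSpace ℝ n)
  set a := ‖(WithLp.toLp 2 x : EuclideanSpace ℝ n)‖
  set b := ‖(WithLp.toLp 2 y : EuclideanSpace ℝ n)‖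
  nlinarith [mul_le_mul_of_nonneg_left h1' hx, mul_nonneg hM (sq_nonneg (a - b))]

lemma norm_le_of_dot (M : Matrix n n ℝ) (q : ℝ) (hq : 0 ≤ q)
    (h : ∀ x y : n → ℝ, ∑ i, x i ^ 2 ≤ 1 → ∑ i, y i ^ 2 ≤ 1 → |x ⬝ᵥ (M *ᵥ y)| ≤ q) : ‖M‖ ≤ q := by
  rw [Matrix.l2_opNorm_def]
  have key : ∀ (z : EuclideanSpace ℝ n), ∃ w : EuclideanSpace ℝ n, ∑ i, w i ^ 2 ≤ 1 ∧ ‖z‖ • w = z := by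
    intro z
    by_cases hz : ‖z‖ = 0
    · refine ⟨0, by simp, ?_⟩
      rw [norm_eq_zero.1 hz]; simp
    · refine ⟨‖z‖⁻¹ • z, ?_, ?_⟩
      · rw [← EuclideanSpace.real_norm_sq_eq, norm_smul, norm_inv, norm_norm, inv_mul_cancel₀ hz]
        simp
      · rw [smul_smul, mul_inv_cancel₀ hz, one_smul]
  refine ContinuousLinearMap.opNorm_le_bound _ hq fun y => ?_
  set z := (LinearEquiv.trans (toEuclideanLin (𝕜 := ℝ) (m := n) (n := n)) LinearMap.toContinuousLinearMap) M y with hz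
  have hz' : z = WithLp.toLp 2 (M *ᵥ y.ofLp) := rfl
  obtain ⟨w, hw, hwz⟩ := key z
  obtain ⟨w', hw', hwy⟩ := key y
  have h1 := h w.ofLp w'.ofLp hw hw'
  have h2 : ‖z‖ ^ 2 = ‖z‖ * ‖y‖ * (w.ofLp ⬝ᵥ (M *ᵥ w'.ofLp)) := by
    rw [← real_inner_self_eq_norm_sq]
    conv_lhs => rw [← hwz]
    have : z = ‖y‖ • WithLp.toLp 2 (M *ᵥ w'.ofLp) := by
      rw [hz']; conv_lhs => rw [← hwy]
      simp [mulVec_smul]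
    conv_lhs => enter [3]; rw [hwz, this]
    rw [inner_smul_left, inner_smul_right]
    have h3 : inner ℝ w (WithLp.toLp 2 (M *ᵥ w'.ofLp)) = w.ofLp ⬝ᵥ (M *ᵥ w'.ofLp) := by
      conv_lhs => rw [← WithLp.toLp_ofLp 2 w]
      rw [EuclideanSpace.inner_toLp_toLp, dotProduct_comm]; simp
    rw [h3]; simp; ring
  have h3 : ‖z‖ ^ 2 ≤ ‖z‖ * ‖y‖ * q := by
    rw [h2]; gcongr; exact (le_abs_self _).trans h1
  rcases (norm_nonneg z).eq_or_lt with h0 | h0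
  · rw [← h0]; positivity
  · by_contra hc
    push Not at hc
    nlinarith

/-- covariance map -/
def eta (A : ι → Matrix n n ℝ) (M : Matrix n n ℝ) : Matrix n n ℝ := ∑ i, A i * M * A i

lemma eta_norm {A : ι → Matrix n n ℝ} {s2 : ℝ} (hA : ∀ i, (A i).IsSymm) (hs : 0 ≤ s2) (hS : SB A s2)
    (M : Matrix n n ℝ) : ‖eta A M‖ ≤ s2 * ‖M‖ := by
  apply norm_le_of_dot _ _ (by positivity)
  intro x y hx hy
  have e : x ⬝ᵥ (eta A M *ᵥ y) = ∑ i, (A i *ᵥ x) ⬝ᵥ (M *ᵥ (A i *ᵥ y)) := by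
    rw [eta, sum_mulVec, dotProduct_sum]
    refine Finset.sum_congr rfl fun i _ => ?_
    rw [← mulVec_mulVec, ← mulVec_mulVec, dotProduct_mulVec, ← mulVec_transpose, (hA i).eq]
  rw [e]
  refine (Finset.abs_sum_le_sum_abs _ _).trans ((Finset.sum_le_sum fun i _ => dot_le _ _ _).trans ?_)
  rw [← Finset.mul_sum, ← Finset.sum_div, Finset.sum_add_distrib]
  have h1 := hS x
  have h2 := hS y
  have hx' : x ⬝ᵥ x ≤ 1 := by simpa [dotProduct, pow_two] using hx
  have hy' : y ⬝ᵥ y ≤ 1 := by simpa [dotProduct, pow_two] using hy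
  have : (∑ i, (A i *ᵥ x) ⬝ᵥ (A i *ᵥ x) + ∑ i, (A i *ᵥ y) ⬝ᵥ (A i *ᵥ y)) / 2 ≤ s2 := by nlinarith
  rw [mul_comm]
  gcongr

lemma tr_rank (M : Matrix n n ℝ) (x y : n → ℝ) : (M * vecMulVec y x).trace = x ⬝ᵥ (M *ᵥ y) := by
  rw [mul_vecMulVec, trace_vecMulVec, dotProduct_comm]

lemma tr_rank_le (M : Matrix n n ℝ) (x y : n → ℝ) (hx : ∑ i, x i ^ 2 ≤ 1) (hy : ∑ i, y i ^ 2 ≤ 1) :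
    |(M * vecMulVec y x).trace| ≤ ‖M‖ := by
  rw [tr_rank]
  have hx' : x ⬝ᵥ x ≤ 1 := by simpa [dotProduct, pow_two] using hx
  have hy' : y ⬝ᵥ y ≤ 1 := by simpa [dotProduct, pow_two] using hy
  refine (dot_le M x y).trans ?_
  nlinarith [norm_nonneg M]

lemma eta_tr (A : ι → Matrix n n ℝ) (M N B : Matrix n n ℝ) :
    ∑ i, (A i * M * A i * N * B).trace = (eta A M * N * B).trace := by
  rw [eta, Finset.sum_mul, Finset.sum_mul, trace_sum]
end recur

open MeasureTheory ProbabilityTheory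
set_option linter.unusedSectionVars false
section recur2
open Matrix MvPolynomial
open scoped Matrix.Norms.L2Operator
variable {ι : Type*} [Fintype ι] {n : Type*} [Fintype n] [DecidableEq n]

/-- trace moments -/
noncomputable def tt (A : ι → Matrix n n ℝ) (k : ℕ) : ℝ := E0 ((XM A ^ (2 * k)).trace)

/-- expansion with errors -/
lemma expand_err (A : ι → Matrix n n ℝ) (B : Matrix n n ℝ) (K : ℕ) (G : MvPolynomial ι ℝ) (hG0 : 0 ≤ E0 G)
    (hG : ∀ h h' : ι → ℝ, ∀ k l, k + l = 2 * K → ∀ a < k, ∀ c < l,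
      |crossW A B (SM A h) (SM A h') a (k - 1 - a) c (l - 1 - c)| ≤ eval h G + eval h' G) :
    |(MM A (2 * (K + 1)) * B).trace -
      ∑ b ∈ Finset.range (K + 1), (eta A (MM A (2 * b)) * MM A (2 * (K - b)) * B).trace|
      ≤ 8 * (K + 1) ^ 3 * E0 G := by
  rw [← E0_tr, show 2 * (K + 1) = 2 * K + 2 by ring, word_ibp]
  have h1 := sum_even (fun m => (eta A (MM A m) * MM A (2 * K - m) * B).trace)
    (fun b => by simp [MM_odd, eta]) K
  have h2 : ∑ b ∈ Finset.range (K + 1), (eta A (MM A (2 * b)) * MM A (2 * (K - b)) * B).trace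
      = ∑ b ∈ Finset.range (K + 1), (eta A (MM A (2 * b)) * MM A (2 * K - 2 * b) * B).trace := by
    refine Finset.sum_congr rfl fun b _ => ?_
    rw [Nat.mul_sub]
  rw [h2, ← h1, ← Finset.sum_sub_distrib]
  refine (Finset.abs_sum_le_sum_abs _ _).trans ?_
  calc _ ≤ ∑ m ∈ Finset.range (2 * K + 1), 4 * (K : ℝ) ^ 2 * E0 G := by
        refine Finset.sum_le_sum fun m hm => ?_
        have hm' : m ≤ 2 * K := by have := Finset.mem_range.1 hm; omega
        have := decouple A B m (2 * K - m) G (fun h h' a ha c hc =>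
          hG h h' m (2 * K - m) (by omega) a ha c hc)
        rw [eta_tr] at this
        refine this.trans ?_
        have : (m : ℝ) * (2 * K - m : ℕ) ≤ (K : ℝ) ^ 2 := by
          rw [Nat.cast_sub hm']; push_cast; nlinarith [sq_nonneg ((m : ℝ) - K)]
        nlinarith
    _ = (2 * K + 1) * (4 * K ^ 2) * E0 G := by
        rw [Finset.sum_const, Finset.card_range, nsmul_eq_mul]; push_cast; ring
    _ ≤ _ := by
        refine mul_le_mul_of_nonneg_right ?_ hG0
        have : (0 : ℝ) ≤ K := by positivity
        nlinarith [pow_nonneg this 3, pow_nonneg this 2]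

lemma tr_even_nonneg (X : Matrix n n ℝ) (hX : X.IsSymm) (k : ℕ) : 0 ≤ (X ^ (2 * k)).trace := by
  obtain ⟨U, μ, hU, hU', hXU⟩ := diag_ex X hX
  rw [hXU, trace_diag U hU']
  exact Finset.sum_nonneg fun x _ => (even_two_mul k).pow_nonneg _

lemma tt_nonneg {A : ι → Matrix n n ℝ} (hA : ∀ i, (A i).IsSymm) (k : ℕ) : 0 ≤ tt A k := by
  have := E0_mono (p := C 0) (q := (XM A ^ (2 * k)).trace) (fun g => by
    rw [eval_tr, eval_C]; exact tr_even_nonneg _ (SM_symm hA g) k)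
  rwa [E0_C] at this

/-- (a) -/
lemma tt_interp {A : ι → Matrix n n ℝ} (hA : ∀ i, (A i).IsSymm) (P : ℕ) (u : ℝ) (hu : 0 < u)
    (h : tt A P ≤ Fintype.card n * u ^ P) (j : ℕ) (hj : j ≤ P) :
    tt A j ≤ 2 * Fintype.card n * u ^ j := by
  have h1 := E0_mono (p := (XM A ^ (2 * j)).trace)
    (q := C (Fintype.card n * u ^ j) + (u ^ j / u ^ P) • (XM A ^ (2 * P)).trace) (fun g => by
      rw [map_add, smul_eval, eval_tr, eval_tr, eval_C]
      obtain ⟨U, μ, hU, hU', hXU⟩ := diag_ex _ (SM_symm hA g)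
      rw [hXU, hXU, trace_diag U hU', trace_diag U hU']
      rw [show (Fintype.card n : ℝ) * u ^ j = ∑ x : n, u ^ j by simp, Finset.mul_sum,
        ← Finset.sum_add_distrib]
      refine Finset.sum_le_sum fun x _ => ?_
      have hs := sq_nonneg (μ x)
      rw [pow_mul, pow_mul]
      generalize μ x ^ 2 = y at hs
      rcases le_total y u with hy | hy
      · have : y ^ j ≤ u ^ j := by gcongr
        have : 0 ≤ u ^ j / u ^ P * y ^ P := by positivity
        linarith
      · have : y ^ j ≤ u ^ j / u ^ P * y ^ P := by
          have e1 : u ^ j / u ^ P * y ^ P = u ^ j * (y / u) ^ P := by rw [div_pow]; ring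
          have e2 : y ^ j = u ^ j * (y / u) ^ j := by rw [div_pow]; field_simp
          rw [e1, e2]
          gcongr
          exact (one_le_div hu).2 hy
        have : 0 ≤ u ^ j := by positivity
        linarith)
  rw [map_add, E0_C, map_smul, smul_eq_mul] at h1
  have h2 : u ^ j / u ^ P * tt A P ≤ u ^ j / u ^ P * (Fintype.card n * u ^ P) := by gcongr
  have h3 : u ^ j / u ^ P * (Fintype.card n * u ^ P) = Fintype.card n * u ^ j := by field_simp
  have h1' : tt A j ≤ Fintype.card n * u ^ j + u ^ j / u ^ P * tt A P := h1
  linarith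

/-- (b) -/
lemma q_rec {A : ι → Matrix n n ℝ} {v2 s2 : ℝ} (hA : ∀ i, (A i).IsSymm) (hv : 0 ≤ v2)
    (hs : 0 ≤ s2) (hS : SB A s2) (hV : VB A v2) (P : ℕ) (u : ℝ) (hu : 0 < u)
    (hP : tt A P ≤ (2 * u) ^ P) (k : ℕ) (hk : k < P) :
    ‖MM A (2 * (k + 1))‖ ≤ s2 * ∑ b ∈ Finset.range (k + 1), ‖MM A (2 * b)‖ * ‖MM A (2 * (k - b))‖
      + 12 * (k + 1 : ℝ) ^ 3 * v2 * s2 * ((2 * u) ^ (k + 1) / (2 * u) ^ 2) := by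
  have hr : 0 < Real.sqrt (2 * u) := by positivity
  have hr2 : Real.sqrt (2 * u) ^ 2 = 2 * u := Real.sq_sqrt (by positivity)
  set r := Real.sqrt (2 * u)
  set γ := (2 * u) ^ (k + 1) / (2 * u) ^ 2 with hγ
  have hγ0 : 0 ≤ γ := by positivity
  apply norm_le_of_dot
  · positivity
  intro x y hx hy
  rw [← tr_rank]
  set G : MvPolynomial ι ℝ := C (v2 * s2 * γ / 2) + (v2 * s2 * γ / (2 * u) ^ P) • (XM A ^ (2 * P)).trace
    with hGdef
  have hGE : E0 G ≤ 3 / 2 * (v2 * s2 * γ) := by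
    rw [hGdef, map_add, E0_C, map_smul, smul_eq_mul]
    have : v2 * s2 * γ / (2 * u) ^ P * tt A P ≤ v2 * s2 * γ / (2 * u) ^ P * (2 * u) ^ P := by gcongr
    have e : v2 * s2 * γ / (2 * u) ^ P * (2 * u) ^ P = v2 * s2 * γ := by field_simp
    rw [tt] at this
    linarith
  have hG0 : 0 ≤ E0 G := by
    rw [hGdef, map_add, E0_C, map_smul, smul_eq_mul]
    have := tt_nonneg hA P
    rw [tt] at this
    positivity
  have h := expand_err A (vecMulVec y x) k G hG0 (by
    intro h h' m l hml a ha c hc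
    have hk1 : 1 ≤ k := by omega
    have hM : a + (m - 1 - a) + c + (l - 1 - c) = 2 * (k - 1) := by omega
    have := cross_rank hA hv hs hS hV (SM A h) (SM A h') (SM_symm hA h) (SM_symm hA h') x y hx hy
      a (m - 1 - a) c (l - 1 - c) P (by omega) r hr
    refine this.trans (le_of_eq ?_)
    rw [hM, pow_mul r, pow_mul r, hr2]
    have : γ = (2 * u) ^ (k - 1) := by
      rw [hγ, show k + 1 = (k - 1) + 2 by omega, pow_add]; field_simp
    rw [hGdef, this]
    simp only [map_add, smul_eval, eval_C, eval_tr]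
    ring)
  have h2 : |∑ b ∈ Finset.range (k + 1), (eta A (MM A (2 * b)) * MM A (2 * (k - b)) * vecMulVec y x).trace|
      ≤ s2 * ∑ b ∈ Finset.range (k + 1), ‖MM A (2 * b)‖ * ‖MM A (2 * (k - b))‖ := by
    refine (Finset.abs_sum_le_sum_abs _ _).trans ?_
    rw [Finset.mul_sum]
    refine Finset.sum_le_sum fun b _ => ?_
    refine (tr_rank_le _ x y hx hy).trans ((Matrix.l2_opNorm_mul _ _).trans ?_)
    rw [← mul_assoc]
    gcongr
    exact eta_norm hA hs hS _
  have h3 : 8 * (k + 1 : ℝ) ^ 3 * E0 G ≤ 8 * (k + 1 : ℝ) ^ 3 * (3 / 2 * (v2 * s2 * γ)) := by gcongr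
  have h4 := abs_sub_abs_le_abs_sub (MM A (2 * (k + 1)) * vecMulVec y x).trace
    (∑ b ∈ Finset.range (k + 1), (eta A (MM A (2 * b)) * MM A (2 * (k - b)) * vecMulVec y x).trace)
  nlinarith

noncomputable def phi (A : ι → Matrix n n ℝ) (P j : ℕ) : ℝ :=
  (eta A (MM A (2 * j)) * MM A (2 * (P - 1 - j))).trace

/-- (c) -/
lemma t_rec {A : ι → Matrix n n ℝ} {v2 s2 : ℝ} (hA : ∀ i, (A i).IsSymm) (hv : 0 ≤ v2)
    (hs : 0 ≤ s2) (hS : SB A s2) (hV : VB A v2) (P : ℕ) (hP : 2 ≤ P) :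
    tt A P ≤ ∑ j ∈ Finset.range P, phi A P j + 16 * P ^ 3 * v2 * s2 * tt A (P - 2) := by
  set G : MvPolynomial ι ℝ := (2 * (v2 * s2)) • (XM A ^ (2 * (P - 2))).trace with hGdef
  have hGE : E0 G = 2 * (v2 * s2) * tt A (P - 2) := by
    rw [hGdef, map_smul, smul_eq_mul, tt]
  have hG0 : 0 ≤ E0 G := by
    rw [hGE]; have := tt_nonneg hA (P - 2); positivity
  have h := expand_err A 1 (P - 1) G hG0 (by
    intro h h' m l hml a ha c hc
    have hM : a + (m - 1 - a) + c + (l - 1 - c) = 2 * (P - 2) := by omega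
    have := cross_trace hA hv hS hV (SM A h) (SM A h') (SM_symm hA h) (SM_symm hA h')
      a (m - 1 - a) c (l - 1 - c) (by rw [hM]; exact even_two_mul _)
    refine this.trans (le_of_eq ?_)
    rw [hM, hGdef]
    simp only [smul_eval, eval_tr]
    ring)
  have hP1 : P - 1 + 1 = P := by omega
  have hP2 : ((P - 1 : ℕ) : ℝ) + 1 = P := by rw [← hP1]; push_cast; simp
  rw [hP1, hP2, hGE] at h
  simp only [Matrix.mul_one] at h
  have e : (MM A (2 * P)).trace = tt A P := by
    rw [tt, MM]; simp [trace]
  rw [e] at h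
  have := (abs_le.1 h).2
  simp only [phi]
  linarith
end recur2

open MeasureTheory ProbabilityTheory
set_option linter.unusedSectionVars false
section moment
open Matrix MvPolynomial
open scoped Matrix.Norms.L2Operator
variable {ι : Type*} [Fintype ι] {n : Type*} [Fintype n] [DecidableEq n]

lemma tr_sandwich (X E : Matrix n n ℝ) (hX : X.IsSymm) (l : ℕ) :
    (X ^ (2 * l) * E).trace ≤ ‖E‖ * (X ^ (2 * l)).trace := by
  have hsym : (X ^ l)ᵀ = X ^ l := by rw [transpose_pow, hX.eq]
  generalize hY : X ^ l = Y at hsym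
  have h2 : X ^ (2 * l) = Yᵀ * Y := by rw [hsym, ← hY, ← pow_add, two_mul]
  have e1 : (X ^ (2 * l) * E).trace = ∑ a, (fun x => Y x a) ⬝ᵥ (E *ᵥ (fun x => Y x a)) := by
    have : (X ^ (2 * l) * E).trace = (Yᵀ * (E * Y)).trace := by
      rw [h2, hsym, Matrix.mul_assoc, trace_mul_comm, Matrix.mul_assoc, trace_mul_comm, Matrix.mul_assoc,
        trace_mul_comm, Matrix.mul_assoc]
    rw [this]; rfl
  have e2 : (X ^ (2 * l)).trace = ∑ a, (fun x => Y x a) ⬝ᵥ (fun x => Y x a) := by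
    rw [h2]; rfl
  rw [e1, e2, Finset.mul_sum]
  refine Finset.sum_le_sum fun a _ => ?_
  refine (le_abs_self _).trans ((dot_le _ _ _).trans (le_of_eq ?_))
  ring

lemma phi_le {A : ι → Matrix n n ℝ} {s2 : ℝ} (hA : ∀ i, (A i).IsSymm)
    (hs : 0 ≤ s2) (hS : SB A s2) (P j : ℕ) :
    phi A P j ≤ s2 * ‖MM A (2 * j)‖ * tt A (P - 1 - j) := by
  rw [phi, trace_mul_comm, ← E0_tr]
  set E := eta A (MM A (2 * j))
  have h := E0_mono (p := (XM A ^ (2 * (P - 1 - j)) * cm E).trace)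
    (q := ‖E‖ • (XM A ^ (2 * (P - 1 - j))).trace) (fun g => by
      rw [smul_eval, eval_tr, trace_map_hom, map_mul_hom, map_pow_hom, eval_XM, eval_cm]
      exact tr_sandwich _ _ (SM_symm hA g) _)
  rw [map_smul, smul_eq_mul] at h
  refine h.trans ?_
  have := tt_nonneg hA (P - 1 - j)
  show ‖E‖ * tt A (P - 1 - j) ≤ _
  gcongr
  exact eta_norm hA hs hS _

lemma phi_symm (A : ι → Matrix n n ℝ) (P j : ℕ) (hj : j < P) : phi A P j = phi A P (P - 1 - j) := by
  have h : ∀ M N : Matrix n n ℝ, (eta A M * N).trace = (eta A N * M).trace := by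
    intro M N
    rw [eta, eta, Finset.sum_mul, Finset.sum_mul, trace_sum, trace_sum]
    refine Finset.sum_congr rfl fun i _ => ?_
    rw [Matrix.mul_assoc, trace_mul_comm (A i * M), ← Matrix.mul_assoc]
  rw [phi, phi, h, show P - 1 - (P - 1 - j) = j by omega]

lemma pow_mid (x y : ℝ) (hx : 0 ≤ x) (hy : 0 ≤ y) (k j l : ℕ) (hkj : k ≤ j) (hkl : k ≤ l) :
    x ^ j * y ^ l ≤ x ^ k * y ^ (j + l - k) + x ^ (j + l - k) * y ^ k := by
  have p1 : 0 ≤ x ^ k * y ^ (j + l - k) := by positivity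
  have p2 : 0 ≤ x ^ (j + l - k) * y ^ k := by positivity
  rcases le_total x y with h | h
  · have : x ^ j * y ^ l ≤ x ^ k * y ^ (j + l - k) := by
      calc x ^ j * y ^ l = x ^ k * (x ^ (j - k) * y ^ l) := by
            rw [← mul_assoc, ← pow_add, Nat.add_sub_cancel' hkj]
        _ ≤ x ^ k * (y ^ (j - k) * y ^ l) := by gcongr
        _ = _ := by rw [← pow_add]; congr 2; omega
    linarith
  · have : x ^ j * y ^ l ≤ x ^ (j + l - k) * y ^ k := by
      calc x ^ j * y ^ l = x ^ j * y ^ (l - k) * y ^ k := by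
            rw [mul_assoc, ← pow_add, Nat.sub_add_cancel hkl]
        _ ≤ x ^ j * x ^ (l - k) * y ^ k := by gcongr
        _ = _ := by rw [← pow_add]; congr 2; omega
    linarith

lemma tr_two (a U V : Matrix n n ℝ) (ha : a.IsSymm) (lam μ : n → ℝ) :
    (a * (V * diagonal lam * Vᵀ) * a * (U * diagonal μ * Uᵀ)).trace
      = ∑ x, ∑ y, (Uᵀ * a * V) x y ^ 2 * (lam y * μ x) := by
  have h1 : (a * (V * diagonal lam * Vᵀ) * a * (U * diagonal μ * Uᵀ)).trace
     = ((Uᵀ * a * V) * diagonal lam * ((Uᵀ * a * V)ᵀ * diagonal μ)).trace := by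
    simp only [transpose_mul, transpose_transpose, ha.eq, Matrix.mul_assoc]
    rw [trace_mul_comm Uᵀ]
    simp only [Matrix.mul_assoc]
  rw [h1]
  generalize Uᵀ * a * V = T
  rw [trace]
  refine Finset.sum_congr rfl fun x _ => ?_
  rw [diag_apply, Matrix.mul_apply]
  refine Finset.sum_congr rfl fun y _ => ?_
  rw [mul_diagonal, mul_diagonal, transpose_apply]
  ring

lemma phi_mid {A : ι → Matrix n n ℝ} (hA : ∀ i, (A i).IsSymm) (P k j : ℕ) (hkj : k ≤ j)
    (hjk : j + k ≤ P - 1) : phi A P j ≤ 2 * phi A P k := by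
  have hw : ∀ j, phi A P j = gE (Real.pi / 2) (wordP A 1 (2 * j) (2 * (P - 1 - j))) := by
    intro j; rw [word_pihalf, eta_tr, Matrix.mul_one, phi]
  by_cases hP : P = 0
  · subst hP
    obtain rfl : j = 0 := by omega
    obtain rfl : k = 0 := by omega
    have : phi A 0 0 = 0 ∨ 0 ≤ phi A 0 0 := by
      right
      rw [phi]; simp only [mul_zero, MM_zero, Matrix.mul_one, zero_tsub, eta, trace_sum]
      refine Finset.sum_nonneg fun i _ => ?_
      simp only [trace, diag_apply, Matrix.mul_apply]
      refine Finset.sum_nonneg fun x _ => Finset.sum_nonneg fun y _ => ?_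
      rw [(hA i).apply x y]
      exact mul_self_nonneg _
    rcases this with h | h <;> linarith
  have hsym := phi_symm A P k (by omega)
  have h : phi A P j ≤ phi A P k + phi A P (P - 1 - k) := by
    rw [hw, hw, hw, ← map_add]
    apply gE_mono
    intro g
    rw [map_add]
    simp only [wordP, map_sum, trace_map_hom, map_mul_hom, map_pow_hom, eval_cm, eval_XL, eval_XR,
      Matrix.mul_one]
    rw [← Finset.sum_add_distrib]
    refine Finset.sum_le_sum fun i _ => ?_
    obtain ⟨U, μ, hU, hU', hXU⟩ := diag_ex _ (SM_symm hA (fun j => rot (Real.pi / 2) g (Sum.inl j)))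
    obtain ⟨V, lam, hV1, hV', hYV⟩ := diag_ex _ (SM_symm hA (fun j => rot (Real.pi / 2) g (Sum.inr j)))
    simp only [hXU, hYV, tr_two _ U V (hA i)]
    rw [← Finset.sum_add_distrib]
    refine Finset.sum_le_sum fun x _ => ?_
    rw [← Finset.sum_add_distrib]
    refine Finset.sum_le_sum fun y _ => ?_
    rw [← mul_add]
    gcongr
    have := pow_mid (lam y ^ 2) (μ x ^ 2) (sq_nonneg _) (sq_nonneg _) k j (P - 1 - j) hkj (by omega)
    rw [show j + (P - 1 - j) - k = P - 1 - k by omega] at this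
    simpa only [pow_mul, show P - 1 - (P - 1 - k) = k by omega] using this
  linarith

theorem moment_bound {A : ι → Matrix n n ℝ} {v2 s2 : ℝ} (hA : ∀ i, (A i).IsSymm) (hv : 0 ≤ v2)
    (hs : 0 ≤ s2) (hS : SB A s2) (hV : VB A v2) (P : ℕ) (hP : 2 ≤ P) (D2 : ℝ)
    (hsD : s2 ≤ D2) (hvD : (P : ℝ) ^ 3 * v2 * s2 ≤ D2 ^ 2)
    (hd : 0 < Fintype.card n) (hdP : Fintype.card n ≤ 2 ^ P) :
    tt A P ≤ (2048 * D2) ^ P := by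
  have hD0 : 0 ≤ D2 := hs.trans hsD
  rcases (tt_nonneg hA P).eq_or_lt with h0 | h0
  · rw [← h0]; positivity
  have hdR : (0 : ℝ) < Fintype.card n := by exact_mod_cast hd
  have hdPR : (Fintype.card n : ℝ) ≤ 2 ^ P := by exact_mod_cast hdP
  set d : ℝ := ((Fintype.card n : ℕ) : ℝ) with hdef
  set u : ℝ := (tt A P / d) ^ ((P : ℝ)⁻¹) with hu
  have hu0 : 0 < u := by positivity
  have huP : u ^ P = tt A P / d := Real.rpow_inv_natCast_pow (by positivity) (by omega)
  have htP : tt A P = d * u ^ P := by rw [huP]; field_simp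
  have ht2 : tt A P ≤ (2 * u) ^ P := by
    rw [htP, mul_pow]; gcongr
  rcases lt_or_ge u (1024 * D2) with h | h
  · exact ht2.trans (pow_le_pow_left₀ (by positivity) (by linarith) P)
  · exfalso
    refine numeric_core P hP s2 v2 D2 u d hu0 hdR hs hsD hvD h (fun k => ‖MM A (2 * k)‖)
      (tt A) (phi A P) (fun k => norm_nonneg _) ?_ ?_ htP ?_ (tt_nonneg hA)
      (t_rec hA hv hs hS hV P hP) (fun j _ => phi_le hA hs hS P j) (fun j hj => phi_symm A P j hj)
      (fun k j => phi_mid hA P k j)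
    · simp only [mul_zero, MM_zero]
      apply norm_le_of_dot _ _ zero_le_one
      intro x y hx hy
      rw [one_mulVec]
      refine (Finset.abs_sum_le_sum_abs _ _).trans ?_
      have : ∀ i ∈ Finset.univ, |x i * y i| ≤ 1 / 2 * x i ^ 2 + 1 / 2 * y i ^ 2 := by
        intro i _
        rw [abs_le]; constructor <;> nlinarith [sq_nonneg (x i - y i), sq_nonneg (x i + y i)]
      refine (Finset.sum_le_sum this).trans ?_
      rw [Finset.sum_add_distrib, ← Finset.mul_sum, ← Finset.mul_sum]
      linarith
    · intro k hk
      exact q_rec hA hv hs hS hV P u hu0 ht2 k hk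
    · intro j hj
      exact tt_interp hA P u hu0 htP.le j hj

lemma norm_eig (X : Matrix n n ℝ) (hX : X.IsSymm) (P : ℕ) (hP : 1 ≤ P) (r : ℝ) (hr : 0 < r) :
    ‖X‖ ≤ r * (1 + (X ^ (2 * P)).trace / r ^ (2 * P)) := by
  obtain ⟨U, μ, hU, hU', hXU⟩ := diag_ex X hX
  obtain ⟨ℓ, hℓ, hμ, -, hle⟩ := exists_ell μ (fun _ => 0) r hr P 1 (by omega)
  rw [hXU (2 * P), trace_diag U hU']
  simp only [pow_one, zero_pow (show 2 * P ≠ 0 by omega), Finset.sum_const_zero, zero_div, add_zero] at hle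
  refine le_trans ?_ hle
  rw [Matrix.l2_opNorm_def]
  refine ContinuousLinearMap.opNorm_le_bound _ hℓ.le fun y => ?_
  show ‖(WithLp.toLp 2 (X *ᵥ y.ofLp) : EuclideanSpace ℝ n)‖ ≤ ℓ * ‖y‖
  have := conj_norm U hU hU' (fun x => μ x ^ 1) ℓ (by simpa using hμ) y.ofLp
  rw [← hXU 1, pow_one] at this
  rw [← sq_le_sq₀ (norm_nonneg _) (by positivity), mul_pow, EuclideanSpace.real_norm_sq_eq,
    EuclideanSpace.real_norm_sq_eq]
  exact this

theorem expect_bound {A : ι → Matrix n n ℝ} {v2 s2 : ℝ} (hA : ∀ i, (A i).IsSymm) (hv : 0 ≤ v2)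
    (hs : 0 ≤ s2) (hS : SB A s2) (hV : VB A v2) (P : ℕ) (hP : 2 ≤ P) (D2 : ℝ) (hD : 0 < D2)
    (hsD : s2 ≤ D2) (hvD : (P : ℝ) ^ 3 * v2 * s2 ≤ D2 ^ 2)
    (hd : 0 < Fintype.card n) (hdP : Fintype.card n ≤ 2 ^ P) :
    ∫ g, ‖SM A g‖ ∂(gam ι) ≤ 2 * Real.sqrt (2048 * D2) := by
  have hm := moment_bound hA hv hs hS hV P hP D2 hsD hvD hd hdP
  have hr : 0 < Real.sqrt (2048 * D2) := by positivity
  have hr2 : Real.sqrt (2048 * D2) ^ 2 = 2048 * D2 := Real.sq_sqrt (by positivity)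
  set r := Real.sqrt (2048 * D2)
  set p : MvPolynomial ι ℝ := C r + (r / r ^ (2 * P)) • (XM A ^ (2 * P)).trace with hp
  have h1 : ∫ g, ‖SM A g‖ ∂(gam ι) ≤ ∫ g, eval g p ∂(gam ι) := by
    refine integral_mono_of_nonneg (ae_of_all _ fun g => norm_nonneg _) (integrable_eval p)
      (ae_of_all _ fun g => ?_)
    refine (norm_eig _ (SM_symm hA g) P (by omega) r hr).trans (le_of_eq ?_)
    show _ = eval g p
    rw [hp, map_add, smul_eval, eval_C, eval_tr]
    ring
  refine h1.trans ?_
  show E0 p ≤ _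
  rw [hp, map_add, E0_C, map_smul, smul_eq_mul]
  have h2 : r / r ^ (2 * P) * tt A P ≤ r / r ^ (2 * P) * (2048 * D2) ^ P := by gcongr
  have h3 : r / r ^ (2 * P) * (2048 * D2) ^ P = r := by
    rw [pow_mul, hr2]; field_simp
  rw [tt] at h2
  linarith
end moment

open MeasureTheory ProbabilityTheory
set_option linter.unusedSectionVars false
section projn
open Matrix
open scoped Matrix.Norms.L2Operator

lemma exists_sub {n : ℕ} (G : Matrix (Fin n) (Fin n) ℝ) (hG : G.PosSemidef) (t δ : ℝ) (ht : 0 < t)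
    (htr : G.trace ≤ n * (δ * t)) :
    ∃ H : Submodule ℝ (EuclideanSpace ℝ (Fin n)),
      (1 - δ) * n ≤ (Module.finrank ℝ H : ℝ) ∧
      ∀ y ∈ H, y.ofLp ⬝ᵥ (G *ᵥ y.ofLp) ≤ t * ‖y‖ ^ 2 := by
  classical
  have hH := hG.isHermitian
  set e := hH.eigenvectorBasis with he
  set S : Finset (Fin n) := Finset.univ.filter fun k => t < hH.eigenvalues k with hS
  refine ⟨(Submodule.span ℝ (S.image e : Set (EuclideanSpace ℝ (Fin n))))ᗮ, ?_, ?_⟩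
  · have h1 := Submodule.finrank_add_finrank_orthogonal
      (Submodule.span ℝ (S.image e : Set (EuclideanSpace ℝ (Fin n))))
    rw [finrank_euclideanSpace_fin] at h1
    have h2 : Module.finrank ℝ (Submodule.span ℝ (S.image e : Set (EuclideanSpace ℝ (Fin n)))) ≤ S.card :=
      (finrank_span_finset_le_card _).trans Finset.card_image_le
    have h3 : (S.card : ℝ) * t ≤ n * (δ * t) := by
      refine le_trans ?_ htr
      rw [hH.trace_eq_sum_eigenvalues]
      have : (S.card : ℝ) * t = ∑ k ∈ S, t := by simp
      rw [this]
      refine (Finset.sum_le_sum (g := fun k => hH.eigenvalues k) fun k hk => ?_).trans ?_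
      · exact (Finset.mem_filter.1 hk).2.le
      · exact Finset.sum_le_sum_of_subset_of_nonneg (Finset.subset_univ _)
          fun k _ _ => hG.eigenvalues_nonneg k
    have h4 : (S.card : ℝ) ≤ n * δ := by
      rw [← mul_assoc] at h3
      exact le_of_mul_le_mul_right h3 ht
    have h1' : ((Module.finrank ℝ (Submodule.span ℝ (S.image e : Set (EuclideanSpace ℝ (Fin n)))) : ℕ) : ℝ)
      + ((Module.finrank ℝ (Submodule.span ℝ (S.image e : Set (EuclideanSpace ℝ (Fin n))))ᗮ : ℕ) : ℝ) = n := by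
      exact_mod_cast h1
    have h2' : ((Module.finrank ℝ (Submodule.span ℝ (S.image e : Set (EuclideanSpace ℝ (Fin n)))) : ℕ) : ℝ)
      ≤ S.card := by exact_mod_cast h2
    linarith
  · intro y hy
    have hz : ∀ k, t < hH.eigenvalues k → inner ℝ (e k) y = 0 := by
      intro k hk
      refine Submodule.inner_right_of_mem_orthogonal (Submodule.subset_span ?_) hy
      simp only [Finset.coe_image, Set.mem_image, Finset.mem_coe]
      exact ⟨k, by simp [hS, hk], rfl⟩
    have h1 : y.ofLp ⬝ᵥ (G *ᵥ y.ofLp) = inner ℝ y (toEuclideanLin G y) := by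
      rw [EuclideanSpace.inner_eq_star_dotProduct]
      simp [dotProduct_comm]
    have hsymm := isSymmetric_toEuclideanLin_iff.2 hH
    have h2 : ∀ k, inner ℝ (e k) (toEuclideanLin G y) = hH.eigenvalues k * inner ℝ (e k) y := by
      intro k
      rw [← hsymm]
      have : toEuclideanLin G (e k) = hH.eigenvalues k • e k := by
        ext i
        have := congrFun (hH.mulVec_eigenvectorBasis k) i
        simpa using this
      rw [this, real_inner_smul_left]
    rw [h1, ← e.sum_inner_mul_inner, ← real_inner_self_eq_norm_sq, ← e.sum_inner_mul_inner,
      Finset.mul_sum]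
    refine Finset.sum_le_sum fun k _ => ?_
    rw [h2, real_inner_comm]
    rcases lt_or_ge t (hH.eigenvalues k) with h | h
    · rw [hz k h]; simp
    · nlinarith [mul_self_nonneg (inner ℝ (e k) y)]

lemma final_numeric (d : ℕ) (hd : 2 ≤ d) : ∃ P : ℕ, 2 ≤ P ∧ d ≤ 2 ^ P ∧
    (P : ℝ) ≤ 5 * Real.log d := by
  have h0 := Nat.pow_pred_clog_lt_self (b := 2) (by norm_num) (x := d) (by omega)
  have h1 := Nat.le_pow_clog (b := 2) (by norm_num) d
  have h2 : 1 ≤ Nat.clog 2 d := Nat.clog_pos (by norm_num) hd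
  obtain ⟨c, hc⟩ : ∃ c, Nat.clog 2 d = c + 1 := ⟨_, (Nat.succ_pred_eq_of_pos h2).symm⟩
  rw [hc] at h0 h1
  simp only [Nat.pred_succ, Nat.pred_eq_sub_one, Nat.add_sub_cancel] at h0
  refine ⟨c + 2, by omega, h1.trans (Nat.pow_le_pow_right (by norm_num) (by omega)), ?_⟩
  have h3 : (c : ℝ) * Real.log 2 ≤ Real.log d := by
    rw [← Real.log_pow]
    apply Real.log_le_log (by positivity)
    exact_mod_cast h0.le
  have h4 : Real.log 2 ≤ Real.log d := Real.log_le_log (by norm_num) (by exact_mod_cast hd)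
  have h5 := Real.log_two_gt_d9
  push_cast
  have : (c : ℝ) * 0.69 ≤ c * Real.log 2 := by gcongr; linarith
  linarith

end projn



section projn2
open Matrix
open scoped Matrix.Norms.L2Operator

lemma opNorm_eq {d : ℕ} (M : Matrix (Fin d) (Fin d) ℝ) : opNorm M = ‖M‖ := rfl

lemma SB_proj {n m d : ℕ} (A : Fin n → Matrix (Fin d) (Fin d) ℝ) (hA : ∀ i, (A i).IsSymm) (s2 : ℝ)
    (h : opNorm (∑ i, A i * A i) ≤ s2) (v : Fin m → EuclideanSpace ℝ (Fin n))
    (hv : Orthonormal ℝ v) : SB (fun j => ∑ i, v j i • A i) s2 := by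
  intro x
  have h1 : ∑ j, ((∑ i, v j i • A i) *ᵥ x) ⬝ᵥ ((∑ i, v j i • A i) *ᵥ x) ≤
      ∑ i, (A i *ᵥ x) ⬝ᵥ (A i *ᵥ x) := by
    simp only [dotProduct]
    rw [Finset.sum_comm, Finset.sum_comm (s := (Finset.univ : Finset (Fin n)))]
    refine Finset.sum_le_sum fun a _ => ?_
    have := hv.sum_inner_products_le (WithLp.toLp 2 (fun i => (A i *ᵥ x) a)) (s := Finset.univ)
    rw [EuclideanSpace.real_norm_sq_eq] at this
    refine le_trans (le_of_eq ?_) (this.trans (le_of_eq ?_))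
    · refine Finset.sum_congr rfl fun j _ => ?_
      rw [Real.norm_eq_abs, sq_abs, pow_two]
      have : ((∑ i, v j i • A i) *ᵥ x) a = inner ℝ (v j) (WithLp.toLp 2 (fun i => (A i *ᵥ x) a)) := by
        rw [Matrix.sum_mulVec, Finset.sum_apply, PiLp.inner_apply]
        refine Finset.sum_congr rfl fun i _ => ?_
        rw [smul_mulVec]
        simp [mul_comm]
      rw [this]
    · exact Finset.sum_congr rfl fun i _ => pow_two _
  refine h1.trans ?_
  have h2 : ∑ i, (A i *ᵥ x) ⬝ᵥ (A i *ᵥ x) = x ⬝ᵥ ((∑ i, A i * A i) *ᵥ x) := by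
    rw [Matrix.sum_mulVec, dotProduct_sum]
    refine Finset.sum_congr rfl fun i _ => ?_
    rw [← mulVec_mulVec, dotProduct_mulVec, dotProduct_mulVec, dotProduct_mulVec, vecMul_mulVec]
    rw [(hA i).eq, ← vecMul_vecMul]
  rw [h2]
  have h3 := (le_abs_self _).trans (dot_le (∑ i, A i * A i) x x)
  rw [opNorm_eq] at h
  have h4 : 0 ≤ x ⬝ᵥ x := Finset.sum_nonneg fun i _ => mul_self_nonneg _
  nlinarith

end projn2

/-- **Projection step in the proof of Lemma 3.1.** There is a universal constant `C > 0`
such that for all positive integers `n`, `d ≥ 2`, reals `σ, f > 0` and `δ ∈ (0,1)`, and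
symmetric matrices `A 1, …, A n ∈ ℝ^{d×d}` with `‖∑ A i ²‖_op ≤ σ²` and
`∑ ‖A i‖_F² ≤ n f²`, there is a subspace `H ⊆ ℝⁿ` of dimension at least `(1-δ)n` such
that for the standard Gaussian vector `y = ∑ j, h j • b j` on `H` (with `b` any
orthonormal basis of `H` and `h` i.i.d. standard Gaussians),
`𝔼[‖∑ i, y i • A i‖_op] ≤ C (σ + (log d)^{3/4} σ^{1/2} (f/δ^{1/2})^{1/2})`. -/
theorem projection_step :
    ∃ C : ℝ, 0 < C ∧ ∀ (n d : ℕ), 0 < n → 2 ≤ d →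
      ∀ (σ f δ : ℝ), 0 < σ → 0 < f → δ ∈ Set.Ioo (0 : ℝ) 1 →
      ∀ A : Fin n → Matrix (Fin d) (Fin d) ℝ,
        (∀ i, (A i).IsSymm) →
        opNorm (∑ i, A i * A i) ≤ σ ^ 2 →
        (∑ i, frobNormSq (A i)) ≤ (n : ℝ) * f ^ 2 →
        ∃ H : Submodule ℝ (EuclideanSpace ℝ (Fin n)),
          (1 - δ) * n ≤ (Module.finrank ℝ H : ℝ) ∧
          ∀ b : OrthonormalBasis (Fin (Module.finrank ℝ H)) ℝ H,
            (∫ h, opNorm (∑ i,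
                ((∑ j, h j • ((b j : H) : EuclideanSpace ℝ (Fin n))) i) • A i)
              ∂(Measure.pi fun _ : Fin (Module.finrank ℝ H) => gaussianReal 0 1)) ≤
            C * (σ + (Real.log d) ^ ((3 : ℝ) / 4) * Real.sqrt σ *
              Real.sqrt (f / Real.sqrt δ)) := by
  refine ⟨460, by norm_num, ?_⟩
  intro n d hn hd σ f δ hσ hf hδ A hA hop hfr
  have hδ0 : 0 < δ := hδ.1
  set W : Matrix (Fin n) (Fin d × Fin d) ℝ := Matrix.of fun i p => A i p.1 p.2 with hW
  have hG : (W * W.conjTranspose).PosSemidef := Matrix.posSemidef_self_mul_conjTranspose W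
  obtain ⟨H, hdim, hH⟩ := exists_sub _ hG (f ^ 2 / δ) δ (by positivity) (by
    refine le_trans (le_of_eq ?_) (hfr.trans (le_of_eq ?_))
    · simp only [Matrix.trace, Matrix.diag_apply, Matrix.mul_apply, frobNormSq]
      refine Finset.sum_congr rfl fun i _ => ?_
      rw [Fintype.sum_prod_type]
      simp [hW, pow_two]
    · field_simp)
  refine ⟨H, hdim, fun b => ?_⟩
  set v : Fin (Module.finrank ℝ H) → EuclideanSpace ℝ (Fin n) := fun j => (b j : H) with hvdef
  have hv : Orthonormal ℝ v := b.orthonormal.comp_linearIsometry H.subtypeₗᵢ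
  set B : Fin (Module.finrank ℝ H) → Matrix (Fin d) (Fin d) ℝ := fun j => ∑ i, v j i • A i with hB
  have hS : SB B (σ ^ 2) := SB_proj A hA _ hop v hv
  have hV : VB B (f ^ 2 / δ) := by
    intro c
    have hmem : (∑ j, c j • v j) ∈ H := Submodule.sum_mem _ fun j _ => H.smul_mem _ (b j).2
    have h1 := hH _ hmem
    have h2 : ‖∑ j, c j • v j‖ ^ 2 = ∑ j, c j ^ 2 := by
      rw [← real_inner_self_eq_norm_sq, hv.inner_sum]
      simp [pow_two]
    rw [h2] at h1
    refine le_trans (le_of_eq ?_) h1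
    rw [← Matrix.mulVec_mulVec, Matrix.dotProduct_mulVec, Matrix.conjTranspose_eq_transpose_of_trivial,
      Matrix.mulVec_transpose, dotProduct, Fintype.sum_prod_type]
    refine Finset.sum_congr rfl fun x _ => Finset.sum_congr rfl fun y _ => ?_
    rw [pow_two]
    have : ∑ j, c j * B j x y = Matrix.vecMul (∑ j, c j • v j).ofLp W (x, y) := by
      simp only [Matrix.vecMul, dotProduct, hW, hB, Matrix.of_apply, Matrix.sum_apply,
        Matrix.smul_apply, smul_eq_mul, WithLp.ofLp_sum, WithLp.ofLp_smul, Finset.sum_apply,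
        Pi.smul_apply, Finset.mul_sum, Finset.sum_mul]
      rw [Finset.sum_comm]
      refine Finset.sum_congr rfl fun i _ => Finset.sum_congr rfl fun j _ => by ring
    rw [this]
  have hBs : ∀ j, (B j).IsSymm := by
    intro j
    simp only [hB, Matrix.IsSymm, Matrix.transpose_sum, Matrix.transpose_smul, (hA _).eq]
  obtain ⟨P, hP2, hPd, hPL⟩ := final_numeric d hd
  set V : ℝ := f / Real.sqrt δ with hVd
  have hV0 : 0 < V := by positivity
  have hV2 : V ^ 2 = f ^ 2 / δ := by rw [hVd, div_pow, Real.sq_sqrt hδ0.le]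
  set q : ℝ := (P : ℝ) ^ ((3 : ℝ) / 4) with hq
  have hP0 : (0 : ℝ) < P := by exact_mod_cast (by omega : 0 < P)
  have hL0 : 0 < Real.log d := by linarith
  have hq0 : 0 < q := by positivity
  have hq4 : q ^ 4 = (P : ℝ) ^ 3 := by
    rw [hq, ← Real.rpow_natCast, ← Real.rpow_mul hP0.le, ← Real.rpow_natCast]; norm_num
  have hqL : q ≤ 5 * (Real.log d) ^ ((3 : ℝ) / 4) := by
    calc q ≤ (5 * Real.log d) ^ ((3 : ℝ) / 4) := Real.rpow_le_rpow hP0.le hPL (by norm_num)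
      _ = 5 ^ ((3 : ℝ) / 4) * (Real.log d) ^ ((3 : ℝ) / 4) := Real.mul_rpow (by norm_num) hL0.le
      _ ≤ 5 * (Real.log d) ^ ((3 : ℝ) / 4) := by
        gcongr
        exact Real.rpow_le_self_of_one_le (by norm_num) (by norm_num)
  have key := expect_bound hBs (by positivity) (sq_nonneg σ) hS hV P hP2
    (σ ^ 2 + q ^ 2 * V * σ) (by positivity) (by nlinarith [mul_pos (mul_pos (pow_pos hq0 2) hV0) hσ])
    (by
      rw [← hq4, ← hV2]
      have : 0 ≤ q ^ 2 * V * σ := by positivity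
      nlinarith [mul_nonneg (sq_nonneg σ) this, pow_nonneg hσ.le 4])
    (by simpa using (by omega : 0 < d)) (by simpa using hPd)
  have hintg : (∫ h, opNorm (∑ i,
                ((∑ j, h j • ((b j : H) : EuclideanSpace ℝ (Fin n))) i) • A i)
              ∂(Measure.pi fun _ : Fin (Module.finrank ℝ H) => gaussianReal 0 1)) =
      ∫ g, opNorm (SM B g) ∂(gam (Fin (Module.finrank ℝ H))) := by
    refine integral_congr_ae (ae_of_all _ fun g => ?_)
    show opNorm _ = opNorm _
    congr 1
    simp only [SM, hB, Finset.smul_sum, hvdef]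
    rw [Finset.sum_comm]
    refine Finset.sum_congr rfl fun i _ => ?_
    simp only [WithLp.ofLp_sum, WithLp.ofLp_smul, Finset.sum_apply, Pi.smul_apply, smul_eq_mul,
      Finset.sum_smul, smul_smul]
  rw [hintg]
  refine le_trans key ?_
  have hs1 : Real.sqrt (2048 * (σ ^ 2 + q ^ 2 * V * σ)) ≤ 46 * (σ + q * Real.sqrt σ * Real.sqrt V) := by
    apply Real.sqrt_le_iff.2 ⟨by positivity, ?_⟩
    have e1 : (q * Real.sqrt σ * Real.sqrt V) ^ 2 = q ^ 2 * V * σ := by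
      rw [mul_pow, mul_pow, Real.sq_sqrt hσ.le, Real.sq_sqrt hV0.le]; ring
    rw [← e1]
    have : 0 ≤ q * Real.sqrt σ * Real.sqrt V := by positivity
    nlinarith [mul_nonneg hσ.le this, sq_nonneg σ, sq_nonneg (q * Real.sqrt σ * Real.sqrt V)]
  have hs2 : q * Real.sqrt σ * Real.sqrt V ≤
      5 * (Real.log d) ^ ((3 : ℝ) / 4) * Real.sqrt σ * Real.sqrt V := by gcongr
  linarith
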